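/- Interaction Böhm-out: let t, u be λ-terms with t ⊑Bλη u and not t ⊑B u. Then there exists an ordinary context C such that C^◦⟨t^•⟩⇓^i and C^◦⟨u^•⟩⇓^{i'} with i ≠ i' (where C^◦ is the white lifting of C and t^•, u^• are the black liftings of t, u). -/

import Mathlib

set_option autoImplicit false

/-! ### Players -/

inductive Player : Type
  | white
  | black
deriving DecidableEq

/-- The opposite player. -/
def Player.op : Player → Player
  | .white => .black
  | .black => .white

/-- `gamma p q` is `0` if the players agree (silent) and `1` otherwise (interaction). -/
def Player.gamma (p q : Player) : ℕ := if p = q then 0 else 1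

/-! ### Ordinary λ-terms (de Bruijn representation) -/

inductive Lam : Type
  | var : ℕ → Lam
  | lam : Lam → Lam
  | app : Lam → Lam → Lam
deriving DecidableEq

namespace Lam

/-- Shift the free de Bruijn indices ≥ `d` by one. -/
def liftAt : Lam → ℕ → Lam
  | .var n, d => .var (if n < d then n else n + 1)
  | .lam t, d => .lam (t.liftAt (d + 1))
  | .app t u, d => .app (t.liftAt d) (u.liftAt d)

/-- Capture-avoiding substitution of `u` for the de Bruijn index `x`. -/
def subst : Lam → ℕ → Lam → Lam
  | .var n, x, u => if n = x then u else if x < n then .var (n - 1) else .var n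
  | .lam t, x, u => .lam (t.subst (x + 1) (u.liftAt 0))
  | .app t s, x, u => .app (t.subst x u) (s.subst x u)

end Lam

/-- Root β-rule: `(λx.t) u ↦ t[x:=u]`. -/
inductive LBetaRoot : Lam → Lam → Prop
  | beta (t u : Lam) : LBetaRoot (.app (.lam t) u) (t.subst 0 u)

/-- Root η-rule: `λx. t x ↦ t` with `x ∉ FV(t)` (enforced by the lifting). -/
inductive LEtaRoot : Lam → Lam → Prop
  | eta (t : Lam) : LEtaRoot (.lam (.app (t.liftAt 0) (.var 0))) t

/-- Closure of a root relation under all contexts. -/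
inductive LFull (R : Lam → Lam → Prop) : Lam → Lam → Prop
  | root {t u : Lam} : R t u → LFull R t u
  | lam {t u : Lam} : LFull R t u → LFull R (.lam t) (.lam u)
  | appL {t t' : Lam} (u : Lam) : LFull R t t' → LFull R (.app t u) (.app t' u)
  | appR (t : Lam) {u u' : Lam} : LFull R u u' → LFull R (.app t u) (.app t u')

/-- Closure under applicative spine contexts `⟨·⟩ t1 … tk`. -/
inductive LSpine (R : Lam → Lam → Prop) : Lam → Lam → Prop
  | root {t u : Lam} : R t u → LSpine R t u
  | appL {t t' : Lam} (u : Lam) : LSpine R t t' → LSpine R (.app t u) (.app t' u)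

/-- Closure under head contexts `λx1…xn.⟨·⟩ t1 … tk`. -/
inductive LHead (R : Lam → Lam → Prop) : Lam → Lam → Prop
  | spine {t u : Lam} : LSpine R t u → LHead R t u
  | lam {t u : Lam} : LHead R t u → LHead R (.lam t) (.lam u)

/-- β-reduction. -/
def LBeta : Lam → Lam → Prop := LFull LBetaRoot
/-- η-reduction. -/
def LEta : Lam → Lam → Prop := LFull LEtaRoot
/-- Head reduction. -/
def LHStep : Lam → Lam → Prop := LHead LBetaRoot
/-- Multistep head reduction. -/
def LHSteps : Lam → Lam → Prop := Relation.ReflTransGen LHStep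

/-- β-conversion (reflexive-symmetric-transitive closure of β-reduction). -/
def LBetaConv : Lam → Lam → Prop :=
  Relation.ReflTransGen (fun a b => LBeta a b ∨ LBeta b a)
/-- η-conversion. -/
def LEtaConv : Lam → Lam → Prop :=
  Relation.ReflTransGen (fun a b => LEta a b ∨ LEta b a)

/-- Head normal forms: no head step out of `t`. -/
def Lam.LHNF (t : Lam) : Prop := ∀ u, ¬ LHStep t u

/-- Head convergence: `t ⇓h`. -/
def Lam.HConv (t : Lam) : Prop := ∃ h, LHSteps t h ∧ h.LHNF

/-- Ordinary contexts (one hole). -/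
inductive LCtx : Type
  | hole : LCtx
  | lam : LCtx → LCtx
  | appL : LCtx → Lam → LCtx
  | appR : Lam → LCtx → LCtx

/-- Plugging (allowing variable capture). -/
def LCtx.fill : LCtx → Lam → Lam
  | .hole, t => t
  | .lam C, t => .lam (C.fill t)
  | .appL C u, t => .app (C.fill t) u
  | .appR s C, t => .app s (C.fill t)

/-- Head contextual preorder on λ-terms. -/
def CtxLe (t u : Lam) : Prop := ∀ C : LCtx, (C.fill t).HConv → (C.fill u).HConv

/-! ### Checkers terms -/

inductive CTerm : Type
  | var : ℕ → CTerm
  | lam : Player → CTerm → CTerm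
  | app : Player → CTerm → CTerm → CTerm
deriving DecidableEq

namespace CTerm

/-- Shift the free de Bruijn indices ≥ `d` by one. -/
def liftAt : CTerm → ℕ → CTerm
  | .var n, d => .var (if n < d then n else n + 1)
  | .lam p t, d => .lam p (t.liftAt (d + 1))
  | .app p t u, d => .app p (t.liftAt d) (u.liftAt d)

/-- Capture-avoiding substitution of `u` for the de Bruijn index `x`. -/
def subst : CTerm → ℕ → CTerm → CTerm
  | .var n, x, u => if n = x then u else if x < n then .var (n - 1) else .var n
  | .lam p t, x, u => .lam p (t.subst (x + 1) (u.liftAt 0))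
  | .app p t s, x, u => .app p (t.subst x u) (s.subst x u)

/-- The underlying ordinary λ-term of a checkers term. -/
def untag : CTerm → Lam
  | .var n => .var n
  | .lam _ t => .lam t.untag
  | .app _ t u => .app t.untag u.untag

end CTerm

/-- Player lifting: tag every abstraction and application with player `p`. -/
def Lam.tag : Lam → Player → CTerm
  | .var n, _ => .var n
  | .lam t, p => .lam p (t.tag p)
  | .app t u, p => .app p (t.tag p) (u.tag p)

/-- Silent β root rule: the abstraction and the application carry the same player. -/
inductive SilentRoot : CTerm → CTerm → Prop
  | beta (p : Player) (t u : CTerm) : SilentRoot (.app p (.lam p t) u) (t.subst 0 u)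

/-- Interaction β root rule: the application carries the opposite player of the abstraction. -/
inductive InterRoot : CTerm → CTerm → Prop
  | beta (p : Player) (t u : CTerm) : InterRoot (.app p.op (.lam p t) u) (t.subst 0 u)

/-- Closure of a root relation under all checkers contexts. -/
inductive CFull (R : CTerm → CTerm → Prop) : CTerm → CTerm → Prop
  | root {t u : CTerm} : R t u → CFull R t u
  | lam (p : Player) {t u : CTerm} : CFull R t u → CFull R (.lam p t) (.lam p u)
  | appL (p : Player) {t t' : CTerm} (u : CTerm) : CFull R t t' → CFull R (.app p t u) (.app p t' u)
  | appR (p : Player) (t : CTerm) {u u' : CTerm} : CFull R u u' → CFull R (.app p t u) (.app p t u')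

/-- Closure under applicative spine contexts `⟨·⟩ @_{q1} t1 … @_{qk} tk`. -/
inductive CSpine (R : CTerm → CTerm → Prop) : CTerm → CTerm → Prop
  | root {t u : CTerm} : R t u → CSpine R t u
  | appL (p : Player) {t t' : CTerm} (u : CTerm) : CSpine R t t' → CSpine R (.app p t u) (.app p t' u)

/-- Closure under checkers head contexts `λ_{p1}x1…λ_{pn}xn.⟨·⟩ @_{q1} t1 … @_{qk} tk`. -/
inductive CHead (R : CTerm → CTerm → Prop) : CTerm → CTerm → Prop
  | spine {t u : CTerm} : CSpine R t u → CHead R t u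
  | lam (p : Player) {t u : CTerm} : CHead R t u → CHead R (.lam p t) (.lam p u)

/-- Silent β-reduction `→τ`. -/
def StepTau : CTerm → CTerm → Prop := CFull SilentRoot
/-- Interaction β-reduction `→⊛`. -/
def StepInt : CTerm → CTerm → Prop := CFull InterRoot
/-- Checkers β-reduction `→βch`. -/
def StepBch (t u : CTerm) : Prop := StepTau t u ∨ StepInt t u

/-- Silent head reduction `→hτ`. -/
def HStepTau : CTerm → CTerm → Prop := CHead SilentRoot
/-- Interaction head reduction `→h⊛`. -/
def HStepInt : CTerm → CTerm → Prop := CHead InterRoot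
/-- Checkers head reduction `→hch`. -/
def HStepCh (t u : CTerm) : Prop := HStepTau t u ∨ HStepInt t u

/-- Checkers head normal form. -/
def CTerm.HNF (t : CTerm) : Prop := ∀ u, ¬ HStepCh t u

/-- `BigStep t k` means `t ⇓^k`: the (deterministic) checkers head evaluation of `t`
terminates and performs exactly `k` interaction steps. -/
inductive BigStep : CTerm → ℕ → Prop
  | nf {t : CTerm} : t.HNF → BigStep t 0
  | silent {t u : CTerm} {k : ℕ} : HStepTau t u → BigStep u k → BigStep t k
  | inter {t u : CTerm} {k : ℕ} : HStepInt t u → BigStep u k → BigStep t (k + 1)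

/-- `HRed t n i u`: a checkers head reduction sequence from `t` to `u` of length `n`
containing exactly `i` interaction steps. -/
inductive HRed : CTerm → ℕ → ℕ → CTerm → Prop
  | refl (t : CTerm) : HRed t 0 0 t
  | silent {t u s : CTerm} {n i : ℕ} : HStepTau t u → HRed u n i s → HRed t (n + 1) i s
  | inter {t u s : CTerm} {n i : ℕ} : HStepInt t u → HRed u n i s → HRed t (n + 1) (i + 1) s

/-- Checkers contexts (one hole). -/
inductive CCtx : Type
  | hole : CCtx
  | lam : Player → CCtx → CCtx
  | appL : Player → CCtx → CTerm → CCtx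
  | appR : Player → CTerm → CCtx → CCtx

/-- Plugging (allowing variable capture). -/
def CCtx.fill : CCtx → CTerm → CTerm
  | .hole, t => t
  | .lam p C, t => .lam p (C.fill t)
  | .appL p C u, t => .app p (C.fill t) u
  | .appR p s C, t => .app p s (C.fill t)

/-- Player lifting of ordinary contexts. -/
def LCtx.tag : LCtx → Player → CCtx
  | .hole, _ => .hole
  | .lam C, p => .lam p (C.tag p)
  | .appL C u, p => .appL p (C.tag p) (u.tag p)
  | .appR s C, p => .appR p (s.tag p) (C.tag p)

/-- Checkers interaction preorder `≼ctx⊛` on checkers terms. -/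
def IntCtxLe (t u : CTerm) : Prop :=
  ∀ (C : CCtx) (k : ℕ), BigStep (C.fill t) k → BigStep (C.fill u) k

/-- Checkers interaction improvement `≼imp⊛` on checkers terms. -/
def ImpCtxLe (t u : CTerm) : Prop :=
  ∀ (C : CCtx) (k : ℕ), BigStep (C.fill t) k → ∃ k', k' ≤ k ∧ BigStep (C.fill u) k'

/-- Interaction preorder `⊑int` on ordinary λ-terms, via black lifting. -/
def IntLe (t u : Lam) : Prop := IntCtxLe (t.tag .black) (u.tag .black)

/-- Interaction improvement `⊑int·imp` on ordinary λ-terms, via black lifting. -/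
def ImpLe (t u : Lam) : Prop := ImpCtxLe (t.tag .black) (u.tag .black)

/-- Interaction equivalence `≡int`. -/
def IntEq (t u : Lam) : Prop := IntLe t u ∧ IntLe u t

/-- Silent conversion `=τ`: reflexive-symmetric-transitive closure of `→τ`. -/
def SilentConv : CTerm → CTerm → Prop :=
  Relation.ReflTransGen (fun a b => StepTau a b ∨ StepTau b a)


/-! ### Böhm preorders -/

/-- `n` abstractions in front of a term. -/
def Lam.absN : ℕ → Lam → Lam
  | 0, t => t
  | n + 1, t => .lam (Lam.absN n t)

/-- Left-nested application of a term to a list of arguments. -/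
def Lam.appList : Lam → List Lam → Lam
  | t, [] => t
  | t, u :: us => Lam.appList (.app t u) us

/-- One unfolding of the Böhm preorder clauses. -/
def BohmClause (R : Lam → Lam → Prop) (t u : Lam) : Prop :=
  (¬ t.HConv) ∨
    ∃ (n y : ℕ) (ts us : List Lam),
      ts.length = us.length ∧
      LHSteps t (Lam.absN n (Lam.appList (.var y) ts)) ∧
      LHSteps u (Lam.absN n (Lam.appList (.var y) us)) ∧
      ∀ (i : ℕ) (hi : i < ts.length) (hj : i < us.length), R (ts.get ⟨i, hi⟩) (us.get ⟨i, hj⟩)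

/-- The Böhm preorder `⊑B`: the largest relation closed under the clauses. -/
def BohmLe (t u : Lam) : Prop :=
  ∃ R : Lam → Lam → Prop, (∀ a b, R a b → BohmClause R a b) ∧ R t u

/-- One unfolding of the extensional Böhm preorder clauses. -/
def BohmEtaClause (R : Lam → Lam → Prop) (t u : Lam) : Prop :=
  (¬ t.HConv) ∨
    ∃ (n y : ℕ) (ts us : List Lam) (h h' : Lam),
      ts.length = us.length ∧
      LHSteps t h ∧ h.LHNF ∧ LEtaConv h (Lam.absN n (Lam.appList (.var y) ts)) ∧
      LHSteps u h' ∧ h'.LHNF ∧ LEtaConv h' (Lam.absN n (Lam.appList (.var y) us)) ∧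
      ∀ (i : ℕ) (hi : i < ts.length) (hj : i < us.length), R (ts.get ⟨i, hi⟩) (us.get ⟨i, hj⟩)

/-- The extensional Böhm preorder `⊑Bλη`: the largest relation closed under the clauses. -/
def BohmEtaLe (t u : Lam) : Prop :=
  ∃ R : Lam → Lam → Prop, (∀ a b, R a b → BohmEtaClause R a b) ∧ R t u

/-! ### Renamings and simultaneous substitutions -/

namespace Lam

def upr (ρ : ℕ → ℕ) : ℕ → ℕ
  | 0 => 0
  | n + 1 => ρ n + 1

def ren : Lam → (ℕ → ℕ) → Lam
  | .var n, ρ => .var (ρ n)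
  | .lam t, ρ => .lam (t.ren (upr ρ))
  | .app t u, ρ => .app (t.ren ρ) (u.ren ρ)

def ups (σ : ℕ → Lam) : ℕ → Lam
  | 0 => .var 0
  | n + 1 => (σ n).ren Nat.succ

def sub : Lam → (ℕ → Lam) → Lam
  | .var n, σ => σ n
  | .lam t, σ => .lam (t.sub (ups σ))
  | .app t u, σ => .app (t.sub σ) (u.sub σ)

theorem ren_ren (t : Lam) (ρ ρ' : ℕ → ℕ) : (t.ren ρ).ren ρ' = t.ren (fun n => ρ' (ρ n)) := by
  induction t generalizing ρ ρ' with
  | var n => rfl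
  | lam t ih =>
    simp only [ren, ih]
    congr 2
    funext n
    cases n <;> rfl
  | app t u iht ihu => simp only [ren, iht, ihu]

theorem ren_sub (t : Lam) (ρ : ℕ → ℕ) (σ : ℕ → Lam) :
    (t.ren ρ).sub σ = t.sub (fun n => σ (ρ n)) := by
  induction t generalizing ρ σ with
  | var n => rfl
  | lam t ih =>
    simp only [ren, sub, ih]
    congr 2
    funext n
    cases n <;> rfl
  | app t u iht ihu => simp only [ren, sub, iht, ihu]

theorem sub_ren (t : Lam) (σ : ℕ → Lam) (ρ : ℕ → ℕ) :
    (t.sub σ).ren ρ = t.sub (fun n => (σ n).ren ρ) := by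
  induction t generalizing ρ σ with
  | var n => rfl
  | lam t ih =>
    simp only [ren, sub, ih]
    congr 2
    funext n
    cases n with
    | zero => rfl
    | succ n => simp only [ups, ren_ren, upr]
  | app t u iht ihu => simp only [ren, sub, iht, ihu]

theorem sub_sub (t : Lam) (σ τ : ℕ → Lam) :
    (t.sub σ).sub τ = t.sub (fun n => (σ n).sub τ) := by
  induction t generalizing σ τ with
  | var n => rfl
  | lam t ih =>
    simp only [sub, ih]
    congr 2
    funext n
    cases n with
    | zero => rfl
    | succ n => simp only [ups, ren_sub, sub_ren]
  | app t u iht ihu => simp only [sub, iht, ihu]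

theorem sub_id (t : Lam) (σ : ℕ → Lam) (h : ∀ n, σ n = .var n) : t.sub σ = t := by
  induction t generalizing σ with
  | var n => exact h n
  | lam t ih =>
    simp only [sub]
    rw [ih]
    intro n
    cases n with
    | zero => rfl
    | succ n => simp only [ups, h, ren]
  | app t u iht ihu => simp only [sub]; rw [iht σ h, ihu σ h]

theorem ren_eq_sub (t : Lam) (ρ : ℕ → ℕ) : t.ren ρ = t.sub (fun n => .var (ρ n)) := by
  induction t generalizing ρ with
  | var n => rfl
  | lam t ih =>
    simp only [ren, sub, ih]
    congr 2
    funext n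
    cases n <;> rfl
  | app t u iht ihu => simp only [ren, sub, iht, ihu]

theorem ren_id (t : Lam) (ρ : ℕ → ℕ) (h : ∀ n, ρ n = n) : t.ren ρ = t := by
  rw [ren_eq_sub]
  exact sub_id _ _ (fun n => by rw [h])

theorem liftAt_eq (t : Lam) (d : ℕ) :
    t.liftAt d = t.ren (fun n => if n < d then n else n + 1) := by
  induction t generalizing d with
  | var n => rfl
  | lam t ih =>
    simp only [ren, liftAt, ih]
    congr 2
    funext n
    cases n with
    | zero => simp [upr]
    | succ n => simp only [upr]; split_ifs <;> omega
  | app t u iht ihu => simp only [ren, liftAt, iht, ihu]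

theorem liftAt_zero (t : Lam) : t.liftAt 0 = t.ren Nat.succ := by
  rw [liftAt_eq]
  congr 1

def sg (x : ℕ) (u : Lam) : ℕ → Lam :=
  fun n => if n = x then u else if x < n then .var (n - 1) else .var n

theorem ups_sg (x : ℕ) (u : Lam) : ups (sg x u) = sg (x + 1) (u.ren Nat.succ) := by
  funext n
  cases n with
  | zero => simp [ups, sg]
  | succ n =>
    simp only [ups, sg]
    split_ifs <;> simp_all [ren]
    all_goals omega

theorem subst_eq (t : Lam) (x : ℕ) (u : Lam) : t.subst x u = t.sub (sg x u) := by
  induction t generalizing x u with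
  | var n => rfl
  | lam t ih => simp only [subst, sub, ih, ups_sg, liftAt_zero]
  | app t u iht ihu => simp only [subst, sub, iht, ihu]

theorem subst_sub (t u : Lam) (σ : ℕ → Lam) :
    (t.subst 0 u).sub σ = (t.sub (ups σ)).subst 0 (u.sub σ) := by
  simp only [subst_eq, sub_sub]
  congr 1
  funext n
  cases n with
  | zero => simp [sg, ups, sub]
  | succ n =>
    simp only [sg, ups, ren_sub]
    simp [sub]
    exact (sub_id _ _ (fun n => by simp)).symm

theorem ren_succ_subst (t u : Lam) : (t.ren Nat.succ).subst 0 u = t := by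
  rw [subst_eq, ren_sub]
  exact sub_id _ _ (fun n => by simp [sg])

theorem ren_succ_sub_ups (t : Lam) (σ : ℕ → Lam) :
    (t.ren Nat.succ).sub (ups σ) = (t.sub σ).ren Nat.succ := by
  rw [ren_sub, sub_ren]
  rfl

theorem ren_succ_ren_upr (t : Lam) (ρ : ℕ → ℕ) :
    (t.ren Nat.succ).ren (upr ρ) = (t.ren ρ).ren Nat.succ := by
  rw [ren_ren, ren_ren]
  rfl

theorem ren_succ_ren_pred (t : Lam) : (t.ren Nat.succ).ren Nat.pred = t := by
  rw [ren_ren]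
  exact ren_id _ _ (fun n => rfl)

theorem eta_beta (s : Lam) : (s.ren (upr Nat.succ)).subst 0 (.var 0) = s := by
  rw [subst_eq, ren_sub]
  refine sub_id _ _ (fun n => ?_)
  cases n <;> simp [sg, upr]

theorem appList_append (t : Lam) (l l' : List Lam) :
    t.appList (l ++ l') = (t.appList l).appList l' := by
  induction l generalizing t with
  | nil => rfl
  | cons a l ih => simp only [List.cons_append, appList, ih]

theorem appList_concat (t : Lam) (l : List Lam) (a : Lam) :
    t.appList (l ++ [a]) = .app (t.appList l) a := by
  rw [appList_append]; rfl

theorem appList_sub (t : Lam) (l : List Lam) (σ : ℕ → Lam) :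
    (t.appList l).sub σ = (t.sub σ).appList (l.map (fun a => a.sub σ)) := by
  induction l generalizing t with
  | nil => rfl
  | cons a l ih => simp only [appList, ih, List.map, sub]

theorem absN_sub (n : ℕ) (t : Lam) (σ : ℕ → Lam) :
    (absN n t).sub σ = absN n (t.sub (ups^[n] σ)) := by
  induction n generalizing σ with
  | zero => rfl
  | succ n ih => simp only [absN, sub, ih, Function.iterate_succ_apply]

end Lam

/-! ### Head reduction -/

theorem LBetaRoot.sub {t t' : Lam} (h : LBetaRoot t t') (σ : ℕ → Lam) :
    LBetaRoot (t.sub σ) (t'.sub σ) := by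
  cases h with
  | beta t u => rw [Lam.subst_sub]; exact .beta _ _

theorem LSpine.sub {t t' : Lam} (h : LSpine LBetaRoot t t') (σ : ℕ → Lam) :
    LSpine LBetaRoot (t.sub σ) (t'.sub σ) := by
  induction h with
  | root h => exact .root (h.sub σ)
  | appL u _ ih => exact .appL _ ih

theorem LHStep.sub {t t' : Lam} (h : LHStep t t') (σ : ℕ → Lam) :
    LHStep (t.sub σ) (t'.sub σ) := by
  unfold LHStep at *
  induction h generalizing σ with
  | spine h => exact .spine (h.sub σ)
  | lam _ ih => exact .lam (ih _)

theorem LSpine.not_lam {t u : Lam} : ¬ LSpine LBetaRoot (.lam t) u := by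
  intro h
  cases h with
  | root h => cases h

theorem LSpine.det {t u v : Lam} (h : LSpine LBetaRoot t u) (h' : LSpine LBetaRoot t v) : u = v := by
  induction h generalizing v with
  | root h =>
    cases h
    cases h' with
    | root h' => cases h'; rfl
    | appL _ h' => exact absurd h' LSpine.not_lam
  | appL w h ih =>
    cases h' with
    | root h' => cases h'; exact absurd h LSpine.not_lam
    | appL _ h' => rw [ih h']

theorem LHStep.det {t u v : Lam} (h : LHStep t u) (h' : LHStep t v) : u = v := by
  unfold LHStep at *
  induction h generalizing v with
  | spine h =>
    cases h' with
    | spine h' => exact h.det h'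
    | lam h' => exact absurd h LSpine.not_lam
  | lam h ih =>
    cases h' with
    | spine h' => exact absurd h' LSpine.not_lam
    | lam h' => rw [ih h']

/-- Counted head reduction. -/
inductive HN : ℕ → Lam → Lam → Prop
  | refl (t : Lam) : HN 0 t t
  | step {k : ℕ} {t u v : Lam} : LHStep t u → HN k u v → HN (k + 1) t v

theorem HN.trans {a b : ℕ} {t u v : Lam} (h : HN a t u) (h' : HN b u v) : HN (a + b) t v := by
  induction h with
  | refl t => simpa using h'
  | step h _ ih =>
    have := HN.step h (ih h')
    rwa [show ∀ k : ℕ, k + b + 1 = k + 1 + b by intro k; omega] at this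

theorem HN.steps {a : ℕ} {t u : Lam} (h : HN a t u) : LHSteps t u := by
  induction h with
  | refl t => exact .refl
  | step h _ ih => exact .head h ih

theorem HN.of_steps {t u : Lam} (h : LHSteps t u) : ∃ k, HN k t u := by
  unfold LHSteps at h
  induction h using Relation.ReflTransGen.head_induction_on with
  | refl => exact ⟨0, .refl _⟩
  | head h _ ih =>
    obtain ⟨k, hk⟩ := ih
    exact ⟨k + 1, .step h hk⟩

theorem HN.split {a b : ℕ} {t u v : Lam} (h : HN a t u) (h' : HN (a + b) t v) : HN b u v := by
  induction h with
  | refl t => simpa using h'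
  | @step k t u w h _ ih =>
    rw [show k + 1 + b = (k + b) + 1 by omega] at h'
    cases h' with
    | step g g' =>
      cases h.det g
      exact ih g'

theorem HN.lam {a : ℕ} {t u : Lam} (h : HN a t u) : HN a (.lam t) (.lam u) := by
  induction h with
  | refl t => exact .refl _
  | step h _ ih => exact .step (LHead.lam h) ih

theorem HN.sub {a : ℕ} {t u : Lam} (h : HN a t u) (σ : ℕ → Lam) : HN a (t.sub σ) (u.sub σ) := by
  induction h with
  | refl t => exact .refl _
  | step h _ ih => exact .step (h.sub σ) ih

theorem HN.le_of_hnf {a b : ℕ} {t u h : Lam} (hu : HN a t u) (hh : HN b t h) (nf : h.LHNF) :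
    a ≤ b := by
  by_contra hlt
  obtain ⟨c, rfl⟩ : ∃ c, a = b + (c + 1) := ⟨a - b - 1, by omega⟩
  have := hh.split hu
  cases this with
  | step g _ => exact nf _ g

theorem LHSteps.sub {t u : Lam} (h : LHSteps t u) (σ : ℕ → Lam) :
    LHSteps (t.sub σ) (u.sub σ) := by
  obtain ⟨k, hk⟩ := HN.of_steps h
  exact (hk.sub σ).steps

/-- `t` is `k` head steps ahead of `u`. -/
def JZ (k : ℤ) (t u : Lam) : Prop := ∃ (a b : ℕ) (w : Lam), HN a t w ∧ HN b u w ∧ (a : ℤ) = b + k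

theorem JZ.refl (t : Lam) : JZ 0 t t := ⟨0, 0, t, .refl _, .refl _, by simp⟩

theorem JZ.symm {k : ℤ} {t u : Lam} (h : JZ k t u) : JZ (-k) u t := by
  obtain ⟨a, b, w, h1, h2, e⟩ := h
  exact ⟨b, a, w, h2, h1, by omega⟩

theorem JZ.trans {k l : ℤ} {t u v : Lam} (h : JZ k t u) (h' : JZ l u v) : JZ (k + l) t v := by
  obtain ⟨a, b, w, h1, h2, e⟩ := h
  obtain ⟨c, d, w', h1', h2', e'⟩ := h'
  rcases le_total b c with hbc | hbc
  · obtain ⟨x, rfl⟩ := Nat.exists_eq_add_of_le hbc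
    have := h2.split h1'
    exact ⟨a + x, d, w', h1.trans this, h2', by push_cast at *; omega⟩
  · obtain ⟨x, rfl⟩ := Nat.exists_eq_add_of_le hbc
    have := h1'.split h2
    exact ⟨a, d + x, w, h1, h2'.trans this, by push_cast at *; omega⟩

theorem JZ.of_step {t u : Lam} (h : LHStep t u) : JZ 1 t u :=
  ⟨1, 0, u, .step h (.refl _), .refl _, by simp⟩

theorem JZ.lam {k : ℤ} {t u : Lam} (h : JZ k t u) : JZ k (.lam t) (.lam u) := by
  obtain ⟨a, b, w, h1, h2, e⟩ := h
  exact ⟨a, b, _, h1.lam, h2.lam, e⟩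

theorem JZ.sub {k : ℤ} {t u : Lam} (h : JZ k t u) (σ : ℕ → Lam) : JZ k (t.sub σ) (u.sub σ) := by
  obtain ⟨a, b, w, h1, h2, e⟩ := h
  exact ⟨a, b, _, h1.sub σ, h2.sub σ, e⟩

theorem beta_step (t u : Lam) : LHStep (.app (.lam t) u) (t.subst 0 u) :=
  LHead.spine (.root (.beta _ _))

theorem JZ.app_step {t t' : Lam} (h : LHStep t t') (u : Lam) : JZ 1 (.app t u) (.app t' u) := by
  cases h with
  | spine h => exact .of_step (LHead.spine (.appL _ h))
  | @lam s s' h =>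
    have h2 : LHStep (s.subst 0 u) (s'.subst 0 u) := by
      rw [Lam.subst_eq, Lam.subst_eq]
      exact LHStep.sub h _
    exact ⟨2, 1, _, .step (beta_step _ _) (.step h2 (.refl _)), .step (beta_step _ _) (.refl _),
      by simp⟩

theorem JZ.app_HN {a : ℕ} {t t' : Lam} (h : HN a t t') (u : Lam) :
    JZ a (.app t u) (.app t' u) := by
  induction h with
  | refl t => exact .refl _
  | step h _ ih =>
    have := (JZ.app_step h u).trans ih
    push_cast
    rwa [add_comm] at this

theorem JZ.app {k : ℤ} {t t' : Lam} (h : JZ k t t') (u : Lam) :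
    JZ k (.app t u) (.app t' u) := by
  obtain ⟨a, b, w, h1, h2, e⟩ := h
  have := (JZ.app_HN h1 u).trans (JZ.app_HN h2 u).symm
  rwa [show (a : ℤ) + -b = k by omega] at this

theorem JZ.hnf {k : ℤ} {t u h : Lam} {s : ℕ} (H : JZ k t u) (ht : HN s t h) (nf : h.LHNF) :
    ∃ s' : ℕ, HN s' u h ∧ (s : ℤ) = s' + k := by
  obtain ⟨a, b, w, h1, h2, e⟩ := H
  have hle := h1.le_of_hnf ht nf
  obtain ⟨c, rfl⟩ := Nat.exists_eq_add_of_le hle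
  exact ⟨b + c, h2.trans (h1.split ht), by push_cast; omega⟩

/-! ### Head normal form shapes -/

structure Shape where
  n : ℕ
  y : ℕ
  ts : List Lam

def Shape.toLam (A : Shape) : Lam := Lam.absN A.n (Lam.appList (.var A.y) A.ts)

theorem not_spine_appList (y : ℕ) (ts : List Lam) (u : Lam) :
    ¬ LSpine LBetaRoot (Lam.appList (.var y) ts) u := by
  induction ts using List.reverseRecOn generalizing u with
  | nil =>
    intro h
    cases h with
    | root h => cases h
  | append_singleton ts a ih =>
    rw [Lam.appList_concat]
    intro h
    generalize hx : Lam.appList (.var y) ts = x at *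
    cases h with
    | root h =>
      cases h
      rcases List.eq_nil_or_concat ts with rfl | ⟨l, b, rfl⟩
      · simp [Lam.appList] at hx
      · simp [Lam.appList_concat] at hx
    | appL _ h => exact ih _ h

theorem appList_ne_lam (y : ℕ) (ts : List Lam) (b : Lam) : Lam.appList (.var y) ts ≠ .lam b := by
  rcases List.eq_nil_or_concat ts with rfl | ⟨l, b, rfl⟩
  · simp [Lam.appList]
  · simp [Lam.appList_concat]

theorem Shape.lhnf (A : Shape) : A.toLam.LHNF := by
  obtain ⟨n, y, ts⟩ := A
  unfold toLam
  induction n with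
  | zero =>
    intro u h
    simp only [Lam.absN] at h
    generalize hx : Lam.appList (.var y) ts = x at *
    cases h with
    | spine h => subst hx; exact not_spine_appList _ _ _ h
    | lam h => exact appList_ne_lam _ _ _ hx
  | succ n ih =>
    intro u h
    simp only [Lam.absN] at h
    cases h with
    | spine h => exact LSpine.not_lam h
    | lam h => exact ih _ h

theorem appList_inj {y z : ℕ} {ts us : List Lam}
    (h : Lam.appList (.var y) ts = Lam.appList (.var z) us) : y = z ∧ ts = us := by
  induction ts using List.reverseRecOn generalizing us with
  | nil =>
    rcases List.eq_nil_or_concat us with rfl | ⟨l, b, rfl⟩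
    · simpa [Lam.appList] using h
    · simp [Lam.appList_concat, Lam.appList] at h
  | append_singleton ts a ih =>
    rcases List.eq_nil_or_concat us with rfl | ⟨l, b, rfl⟩
    · simp [Lam.appList_concat, Lam.appList] at h
    · simp only [List.concat_eq_append, Lam.appList_concat, Lam.app.injEq] at h
      obtain ⟨h1, rfl⟩ := h
      obtain ⟨rfl, rfl⟩ := ih h1
      simp

theorem Shape.toLam_inj {A B : Shape} (h : A.toLam = B.toLam) : A = B := by
  obtain ⟨n, y, ts⟩ := A
  obtain ⟨m, z, us⟩ := B
  unfold toLam at h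
  simp only at h
  induction n generalizing m with
  | zero =>
    cases m with
    | zero =>
      obtain ⟨rfl, rfl⟩ := appList_inj h
      rfl
    | succ m => exact absurd h (appList_ne_lam _ _ _)
  | succ n ih =>
    cases m with
    | zero => exact absurd h.symm (appList_ne_lam _ _ _)
    | succ m =>
      simp only [Lam.absN, Lam.lam.injEq] at h
      have := ih m h
      simp_all

theorem spine_or_shape (t : Lam) :
    (∃ u, LSpine LBetaRoot t u) ∨ (∃ b, t = .lam b) ∨ ∃ y ts, t = Lam.appList (.var y) ts := by
  induction t with
  | var n => exact .inr (.inr ⟨n, [], rfl⟩)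
  | lam t _ => exact .inr (.inl ⟨t, rfl⟩)
  | app t u iht _ =>
    rcases iht with ⟨v, h⟩ | ⟨b, rfl⟩ | ⟨y, ts, rfl⟩
    · exact .inl ⟨_, .appL _ h⟩
    · exact .inl ⟨_, .root (.beta _ _)⟩
    · exact .inr (.inr ⟨y, ts ++ [u], (Lam.appList_concat _ _ _).symm⟩)

theorem hnf_shape {t : Lam} (h : t.LHNF) : ∃ A : Shape, t = A.toLam := by
  induction t with
  | var n => exact ⟨⟨0, n, []⟩, rfl⟩
  | lam t ih =>
    obtain ⟨⟨n, y, ts⟩, hA⟩ := ih (fun u hu => h _ (LHead.lam hu))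
    exact ⟨⟨n + 1, y, ts⟩, by rw [hA]; rfl⟩
  | app t u _ _ =>
    rcases spine_or_shape (.app t u) with ⟨v, hv⟩ | ⟨b, hb⟩ | ⟨y, ts, e⟩
    · exact absurd (LHead.spine hv) (h v)
    · cases hb
    · exact ⟨⟨0, y, ts⟩, e⟩

/-- `t` has head normal form of shape `A`. -/
def Hs (t : Lam) (A : Shape) : Prop := LHSteps t A.toLam

theorem Hs.refl (A : Shape) : Hs A.toLam A := Relation.ReflTransGen.refl

theorem Hs.unique {t : Lam} {A B : Shape} (h : Hs t A) (h' : Hs t B) : A = B := by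
  obtain ⟨a, ha⟩ := HN.of_steps h
  obtain ⟨b, hb⟩ := HN.of_steps h'
  have e : a = b := le_antisymm (ha.le_of_hnf hb B.lhnf) (hb.le_of_hnf ha A.lhnf)
  subst e
  have := ha.split (b := 0) hb
  apply Shape.toLam_inj
  generalize A.toLam = x at this
  generalize B.toLam = y at this
  cases this
  rfl

theorem hconv_iff {t : Lam} : t.HConv ↔ ∃ A, Hs t A := by
  constructor
  · rintro ⟨h, h1, h2⟩
    obtain ⟨A, rfl⟩ := hnf_shape h2
    exact ⟨A, h1⟩
  · rintro ⟨A, h⟩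
    exact ⟨_, h, A.lhnf⟩

theorem Hs.of_JZ {k : ℤ} {t u : Lam} {A : Shape} (h : Hs t A) (j : JZ k t u) : Hs u A := by
  obtain ⟨a, ha⟩ := HN.of_steps h
  obtain ⟨b, hb, _⟩ := j.hnf ha A.lhnf
  exact hb.steps

theorem Hs.JZ {t : Lam} {A : Shape} (h : Hs t A) : ∃ k, JZ k t A.toLam := by
  obtain ⟨a, ha⟩ := HN.of_steps h
  exact ⟨a, a, 0, _, ha, .refl _, by simp⟩

/-! ### Parallel η-expansion -/

inductive EtaX : Lam → Lam → Prop
  | var (n : ℕ) : EtaX (.var n) (.var n)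
  | lam {t u : Lam} : EtaX t u → EtaX (.lam t) (.lam u)
  | app {t u r s : Lam} : EtaX t u → EtaX r s → EtaX (.app t r) (.app u s)
  | eta {t u : Lam} : EtaX t u → EtaX t (.lam (.app (u.ren Nat.succ) (.var 0)))

theorem EtaX.refl (t : Lam) : EtaX t t := by
  induction t with
  | var n => exact .var n
  | lam t ih => exact .lam ih
  | app t u iht ihu => exact .app iht ihu

theorem EtaX.of_LEta {t u : Lam} (h : LEta t u) : EtaX u t := by
  unfold LEta at h
  induction h with
  | root h =>
    cases h
    rw [Lam.liftAt_zero]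
    exact .eta (.refl _)
  | lam _ ih => exact .lam ih
  | appL u _ ih => exact .app ih (.refl _)
  | appR t _ ih => exact .app (.refl _) ih

theorem EtaX.ren {t u : Lam} (h : EtaX t u) (ρ : ℕ → ℕ) : EtaX (t.ren ρ) (u.ren ρ) := by
  induction h generalizing ρ with
  | var n => exact .var _
  | lam _ ih => exact .lam (ih _)
  | app _ _ ih1 ih2 => exact .app (ih1 _) (ih2 _)
  | @eta t u _ ih =>
    have := EtaX.eta (ih ρ)
    rw [← Lam.ren_succ_ren_upr] at this
    exact this

theorem EtaX.sub {t u : Lam} (h : EtaX t u) {σ τ : ℕ → Lam} (hs : ∀ n, EtaX (σ n) (τ n)) :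
    EtaX (t.sub σ) (u.sub τ) := by
  induction h generalizing σ τ with
  | var n => exact hs n
  | lam _ ih =>
    refine .lam (ih (fun n => ?_))
    cases n with
    | zero => exact .var 0
    | succ n => exact (hs n).ren _
  | app _ _ ih1 ih2 => exact .app (ih1 hs) (ih2 hs)
  | @eta t u _ ih =>
    have := EtaX.eta (ih hs)
    rw [← Lam.ren_succ_sub_ups] at this
    exact this

theorem EtaX.subst {t u r s : Lam} (h : EtaX t u) (h' : EtaX r s) :
    EtaX (t.subst 0 r) (u.subst 0 s) := by
  rw [Lam.subst_eq, Lam.subst_eq]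
  refine h.sub (fun n => ?_)
  unfold Lam.sg
  split_ifs
  · exact h'
  · exact .refl _
  · exact .refl _

theorem EtaX.lam_app {s u : Lam} (h : EtaX (.lam s) u) (R : Lam) :
    ∃ (s' : Lam) (k : ℤ), 1 ≤ k ∧ EtaX s s' ∧ JZ k (.app u R) (s'.subst 0 R) := by
  generalize hx : Lam.lam s = x at h
  induction h with
  | var n => cases hx
  | @lam t u h _ =>
    cases hx
    exact ⟨u, 1, le_refl _, h, .of_step (beta_step _ _)⟩
  | app _ _ _ _ => cases hx
  | @eta t u _ ih =>
    obtain ⟨s', k, hk, h1, h2⟩ := ih hx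
    refine ⟨s', 1 + k, by omega, h1, JZ.trans (.of_step (beta_step _ _)) ?_⟩
    simpa [Lam.subst, Lam.ren_succ_subst] using h2

theorem EtaX.spine_sim {t t' u : Lam} (h : EtaX t u) (hs : LSpine LBetaRoot t t') :
    ∃ (u' : Lam) (k : ℤ), 1 ≤ k ∧ EtaX t' u' ∧ JZ k u u' := by
  induction h generalizing t' with
  | var n => cases hs with | root hs => cases hs
  | lam _ _ => exact absurd hs LSpine.not_lam
  | app h1 h2 ih1 ih2 =>
    cases hs with
    | root hs =>
      cases hs
      obtain ⟨s', k, hk, g1, g2⟩ := h1.lam_app _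
      exact ⟨_, k, hk, g1.subst h2, g2⟩
    | appL _ hs =>
      obtain ⟨u', k, hk, g1, g2⟩ := ih1 hs
      exact ⟨_, k, hk, g1.app h2, g2.app _⟩
  | @eta t u _ ih =>
    obtain ⟨u', k, hk, g1, g2⟩ := ih hs
    refine ⟨_, k, hk, g1.eta, ?_⟩
    refine (JZ.app ?_ _).lam
    rw [Lam.ren_eq_sub, Lam.ren_eq_sub]
    exact g2.sub _

theorem EtaX.sim {t t' u : Lam} (h : EtaX t u) (hs : LHStep t t') :
    ∃ (u' : Lam) (k : ℤ), 1 ≤ k ∧ EtaX t' u' ∧ JZ k u u' := by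
  induction h generalizing t' with
  | var n => exact (EtaX.var n).spine_sim (by cases hs with | spine h => exact h)
  | lam _ ih =>
    cases hs with
    | spine hs => exact absurd hs LSpine.not_lam
    | lam hs =>
      obtain ⟨u', k, hk, g1, g2⟩ := ih hs
      exact ⟨_, k, hk, g1.lam, g2.lam⟩
  | app h1 h2 _ _ => exact (EtaX.app h1 h2).spine_sim (by cases hs with | spine h => exact h)
  | @eta t u _ ih =>
    obtain ⟨u', k, hk, g1, g2⟩ := ih hs
    refine ⟨_, k, hk, g1.eta, ?_⟩
    refine (JZ.app ?_ _).lam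
    rw [Lam.ren_eq_sub, Lam.ren_eq_sub]
    exact g2.sub _

theorem EtaX.sim_steps {t t' u : Lam} (h : EtaX t u) (hs : LHSteps t t') :
    ∃ (u' : Lam) (k : ℤ), EtaX t' u' ∧ JZ k u u' := by
  unfold LHSteps at hs
  induction hs with
  | refl => exact ⟨u, 0, h, .refl _⟩
  | tail _ hs ih =>
    obtain ⟨u1, k1, g1, g2⟩ := ih
    obtain ⟨u', k, hk, e1, e2⟩ := g1.sim hs
    exact ⟨u', _, e1, g2.trans e2⟩

theorem EtaX.reflect {s : ℕ} {t u h : Lam} (e : EtaX t u) (hs : HN s u h) (nf : h.LHNF) :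
    t.HConv := by
  induction s using Nat.strong_induction_on generalizing t u with
  | _ s ih =>
    by_cases ht : t.LHNF
    · exact ⟨t, .refl, ht⟩
    · unfold Lam.LHNF at ht
      push Not at ht
      obtain ⟨t', ht'⟩ := ht
      obtain ⟨u', k, hk, e1, e2⟩ := e.sim ht'
      obtain ⟨s', hs', hss⟩ := e2.hnf hs nf
      obtain ⟨h', g1, g2⟩ := ih s' (by omega) e1 hs'
      exact ⟨h', .head ht' g1, g2⟩

/-- The equivalence generated by parallel η-expansion. -/
def EtaE : Lam → Lam → Prop := Relation.ReflTransGen (fun a b => EtaX a b ∨ EtaX b a)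

theorem EtaE.refl (t : Lam) : EtaE t t := Relation.ReflTransGen.refl

theorem EtaE.trans {a b c : Lam} (h : EtaE a b) (h' : EtaE b c) : EtaE a c :=
  Relation.ReflTransGen.trans h h'

theorem EtaE.symm {a b : Lam} (h : EtaE a b) : EtaE b a := by
  unfold EtaE at h
  induction h with
  | refl => exact .refl _
  | tail _ h ih => exact EtaE.trans (Relation.ReflTransGen.single h.symm) ih

theorem EtaX.toE {a b : Lam} (h : EtaX a b) : EtaE a b := .single (.inl h)

theorem EtaE.of_conv {a b : Lam} (h : LEtaConv a b) : EtaE a b := by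
  unfold LEtaConv at h
  induction h with
  | refl => exact .refl _
  | tail _ h ih =>
    refine EtaE.trans ih (Relation.ReflTransGen.single ?_)
    rcases h with h | h
    · exact .inr (.of_LEta h)
    · exact .inl (.of_LEta h)

theorem EtaE.sub {a b : Lam} (h : EtaE a b) (σ : ℕ → Lam) : EtaE (a.sub σ) (b.sub σ) := by
  unfold EtaE at h
  induction h with
  | refl => exact .refl _
  | tail _ h ih =>
    refine EtaE.trans ih (Relation.ReflTransGen.single ?_)
    rcases h with h | h
    · exact .inl (h.sub fun n => .refl _)
    · exact .inr (h.sub fun n => .refl _)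

theorem EtaE.ren {a b : Lam} (h : EtaE a b) (ρ : ℕ → ℕ) : EtaE (a.ren ρ) (b.ren ρ) := by
  rw [Lam.ren_eq_sub, Lam.ren_eq_sub]
  exact h.sub _

/-! ### Padding -/

def padL (l : List Lam) : List Lam := l.map (fun a => a.ren Nat.succ) ++ [.var 0]

/-- Relations compatible with padding. -/
structure PadOK (P : Lam → Lam → Prop) : Prop where
  ren : ∀ a b (ρ : ℕ → ℕ), P a b → P (a.ren ρ) (b.ren ρ)
  var0 : P (.var 0) (.var 0)

theorem EtaE.padOK : PadOK EtaE := ⟨fun _ _ ρ h => EtaE.ren h ρ, .refl _⟩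

theorem PadOK.pad {P : Lam → Lam → Prop} (hP : PadOK P) {l l' : List Lam}
    (h : List.Forall₂ P l l') : List.Forall₂ P (padL l) (padL l') := by
  unfold padL
  induction h with
  | nil => exact .cons hP.var0 .nil
  | cons h _ ih => exact .cons (hP.ren _ _ _ h) ih

theorem PadOK.padN {P : Lam → Lam → Prop} (hP : PadOK P) {l l' : List Lam}
    (h : List.Forall₂ P l l') (n : ℕ) : List.Forall₂ P (padL^[n] l) (padL^[n] l') := by
  induction n with
  | zero => exact h
  | succ n ih => rw [Function.iterate_succ_apply', Function.iterate_succ_apply']; exact hP.pad ih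

theorem PadOK.unpad {P : Lam → Lam → Prop} (hP : PadOK P) {l l' : List Lam}
    (h : List.Forall₂ P (padL l) (padL l')) : List.Forall₂ P l l' := by
  unfold padL at h
  induction l generalizing l' with
  | nil =>
    cases l' with
    | nil => exact .nil
    | cons b l' =>
      have := h.length_eq
      simp at this
  | cons a l ih =>
    cases l' with
    | nil =>
      have := h.length_eq
      simp at this
    | cons b l' =>
      simp only [List.map_cons, List.cons_append] at h
      cases h with
      | cons h1 h2 =>
        refine .cons ?_ (ih h2)
        have := hP.ren _ _ Nat.pred h1
        rwa [Lam.ren_succ_ren_pred, Lam.ren_succ_ren_pred] at this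

theorem PadOK.unpadN {P : Lam → Lam → Prop} (hP : PadOK P) {l l' : List Lam} (n : ℕ)
    (h : List.Forall₂ P (padL^[n] l) (padL^[n] l')) : List.Forall₂ P l l' := by
  induction n with
  | zero => exact h
  | succ n ih =>
    rw [Function.iterate_succ_apply', Function.iterate_succ_apply'] at h
    exact ih (hP.unpad h)

theorem padL_length (l : List Lam) (n : ℕ) : (padL^[n] l).length = l.length + n := by
  induction n with
  | zero => rfl
  | succ n ih => rw [Function.iterate_succ_apply', padL]; simp [ih]; omega

def PadRel (P : Lam → Lam → Prop) (A B : Shape) : Prop :=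
  ∃ i j : ℕ, A.n + i = B.n + j ∧ A.y + i = B.y + j ∧
    List.Forall₂ P (padL^[i] A.ts) (padL^[j] B.ts)

theorem forall₂_comp {P Q S : Lam → Lam → Prop} (h : ∀ a b c, P a b → Q b c → S a c)
    {l1 l2 l3 : List Lam} (h1 : List.Forall₂ P l1 l2) (h2 : List.Forall₂ Q l2 l3) :
    List.Forall₂ S l1 l3 := by
  induction h1 generalizing l3 with
  | nil => cases h2; exact .nil
  | cons g _ ih =>
    cases h2 with
    | cons g' h2 => exact .cons (h _ _ _ g g') (ih h2)

theorem PadRel.comp {P Q S : Lam → Lam → Prop} (hP : PadOK P) (hQ : PadOK Q)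
    (h : ∀ a b c, P a b → Q b c → S a c) {A B C : Shape} (h1 : PadRel P A B) (h2 : PadRel Q B C) :
    PadRel S A C := by
  obtain ⟨i, j, e1, e2, h3⟩ := h1
  obtain ⟨k, l, f1, f2, h4⟩ := h2
  refine ⟨k + i, j + l, by omega, by omega, ?_⟩
  have g3 := hP.padN h3 k
  have g4 := hQ.padN h4 j
  rw [← Function.iterate_add_apply, ← Function.iterate_add_apply] at g3 g4
  rw [add_comm k j] at g3
  exact forall₂_comp h g3 g4

theorem PadRel.symmE {A B : Shape} (h : PadRel EtaE A B) : PadRel EtaE B A := by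
  obtain ⟨i, j, e1, e2, h3⟩ := h
  refine ⟨j, i, e1.symm, e2.symm, ?_⟩
  exact List.Forall₂.flip (List.Forall₂.imp (fun a b hab => EtaE.symm hab) h3)

theorem forall₂_reflE (l : List Lam) : List.Forall₂ EtaE l l :=
  List.forall₂_same.2 (fun a _ => EtaE.refl a)

theorem PadRel.reflE (A : Shape) : PadRel EtaE A A := ⟨0, 0, rfl, rfl, forall₂_reflE _⟩

theorem PadRel.transE {A B C : Shape} (h : PadRel EtaE A B) (h' : PadRel EtaE B C) :
    PadRel EtaE A C :=
  PadRel.comp EtaE.padOK EtaE.padOK (fun _ _ _ => EtaE.trans) h h'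

theorem PadRel.len {P : Lam → Lam → Prop} {A B : Shape} (h : PadRel P A B) :
    A.n + B.ts.length = B.n + A.ts.length := by
  obtain ⟨i, j, e1, e2, h3⟩ := h
  have := h3.length_eq
  rw [padL_length, padL_length] at this
  omega

/-- Cancel padding on the longer side. -/
theorem PadRel.cancel {P : Lam → Lam → Prop} (hP : PadOK P) {A B : Shape} (h : PadRel P A B)
    {d : ℕ} (hd : A.n + d = B.n) :
    A.y + d = B.y ∧ List.Forall₂ P (padL^[d] A.ts) B.ts := by
  obtain ⟨i, j, e1, e2, h3⟩ := h
  obtain rfl : i = j + d := by omega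
  refine ⟨by omega, ?_⟩
  rw [Function.iterate_add_apply] at h3
  exact hP.unpadN _ h3

theorem PadRel.lam {P : Lam → Lam → Prop} {n y m z : ℕ} {ts us : List Lam}
    (h : PadRel P ⟨n, y, ts⟩ ⟨m, z, us⟩) : PadRel P ⟨n + 1, y, ts⟩ ⟨m + 1, z, us⟩ := by
  obtain ⟨i, j, e1, e2, h3⟩ := h
  refine ⟨i, j, ?_, e2, h3⟩
  simp only at *
  omega

theorem padL_sub (l : List Lam) (σ : ℕ → Lam) :
    (padL l).map (fun a => a.sub (Lam.ups σ)) = padL (l.map (fun a => a.sub σ)) := by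
  simp only [padL, List.map_append, List.map_map, List.map_cons, List.map_nil]
  congr 1
  apply List.map_congr_left
  intro a _
  exact Lam.ren_succ_sub_ups _ _

theorem padN_sub (n : ℕ) (l : List Lam) (σ : ℕ → Lam) :
    (padL^[n] l).map (fun a => a.sub (Lam.ups^[n] σ)) = padL^[n] (l.map (fun a => a.sub σ)) := by
  induction n with
  | zero => rfl
  | succ n ih =>
    simp only [Function.iterate_succ_apply']
    rw [padL_sub, ih]

theorem ups_sg_large (n z : ℕ) (R : Lam) :
    Lam.ups^[n] (Lam.sg 0 R) (z + 1 + n) = .var (z + n) := by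
  induction n with
  | zero => simp [Lam.sg]
  | succ n ih =>
    rw [Function.iterate_succ_apply', ← add_assoc]
    simp only [Lam.ups, ih, Lam.ren]
    rfl

theorem forall₂_map_sub {l l' : List Lam} (h : List.Forall₂ EtaE l l') (σ : ℕ → Lam) :
    List.Forall₂ EtaE (l.map (fun a => a.sub σ)) (l'.map (fun a => a.sub σ)) := by
  induction h with
  | nil => exact .nil
  | cons h _ ih => exact .cons (h.sub σ) ih

theorem forall₂_concat {P : Lam → Lam → Prop} {l l' : List Lam} {a b : Lam}
    (h : List.Forall₂ P l l') (h' : P a b) : List.Forall₂ P (l ++ [a]) (l' ++ [b]) := by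
  induction h with
  | nil => exact .cons h' .nil
  | cons h _ ih => exact .cons h ih

/-- The head normal form of a parallel η-expansion of a head normal form. -/
theorem EtaX.shape {h u : Lam} (e : EtaX h u) (A : Shape) (hA : h = A.toLam) :
    ∃ B, Hs u B ∧ PadRel EtaE A B := by
  induction e generalizing A with
  | var n =>
    have : A = ⟨0, n, []⟩ := Shape.toLam_inj hA.symm
    subst this
    exact ⟨⟨0, n, []⟩, Hs.refl ⟨0, n, []⟩, .reflE _⟩
  | @lam t u _ ih =>
    obtain ⟨n, y, ts⟩ := A
    cases n with
    | zero => exact absurd hA.symm (appList_ne_lam _ _ _)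
    | succ n =>
      simp only [Shape.toLam, Lam.absN, Lam.lam.injEq] at hA
      obtain ⟨⟨m, z, us⟩, h1, h2⟩ := ih ⟨n, y, ts⟩ hA
      refine ⟨⟨m + 1, z, us⟩, ?_, h2.lam⟩
      obtain ⟨k, hk⟩ := HN.of_steps h1
      exact hk.lam.steps
  | @app t u r s _ e2 ih _ =>
    obtain ⟨n, y, ts⟩ := A
    cases n with
    | succ n => cases hA
    | zero =>
      simp only [Shape.toLam, Lam.absN] at hA
      rcases List.eq_nil_or_concat ts with rfl | ⟨l, b, rfl⟩
      · cases hA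
      · rw [List.concat_eq_append, Lam.appList_concat] at hA
        simp only [Lam.app.injEq] at hA
        obtain ⟨rfl, rfl⟩ := hA
        obtain ⟨⟨m, z, us⟩, h1, h2⟩ := ih ⟨0, y, l⟩ rfl
        obtain ⟨k, hk⟩ := h1.JZ
        have hk := (hk.app s).symm
        obtain ⟨c1, c2⟩ := h2.cancel EtaE.padOK (d := m) (by simp)
        simp only at c1 c2
        subst c1
        cases m with
        | zero =>
          refine ⟨⟨0, y, us ++ [s]⟩, ?_, 0, 0, rfl, rfl, ?_⟩
          · refine Hs.of_JZ ?_ hk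
            have := Hs.refl ⟨0, y, us ++ [s]⟩
            simpa only [Shape.toLam, Lam.absN, Lam.appList_concat, add_zero] using this
          · simpa using forall₂_concat c2 e2.toE
        | succ m =>
          refine ⟨⟨m, y + m, us.map (fun a => a.sub (Lam.ups^[m] (Lam.sg 0 s)))⟩, ?_,
            m, 0, by simp, by simp, ?_⟩
          · refine Hs.of_JZ ?_ hk
            refine Relation.ReflTransGen.single ?_
            have := beta_step (Lam.absN m (Lam.appList (.var (y + (m + 1))) us)) s
            rw [Lam.subst_eq, Lam.absN_sub, Lam.appList_sub] at this
            rw [show y + (m + 1) = y + 1 + m by omega] at this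
            simp only [Lam.sub, ups_sg_large] at this
            rw [show y + 1 + m = y + (m + 1) by omega] at this
            exact this
          · have := forall₂_map_sub c2 (Lam.ups^[m] (Lam.sg 0 s))
            rw [Function.iterate_succ_apply, padN_sub] at this
            refine forall₂_comp (P := EtaE) (Q := EtaE) (S := EtaE) (fun _ _ _ => EtaE.trans) ?_ this
            apply EtaE.padOK.padN
            simp only [padL, List.map_append, List.map_map, List.map_cons, List.map_nil,
              List.concat_eq_append]
            refine forall₂_concat ?_ ?_
            · have e : (l.map ((fun a => Lam.sub a (Lam.sg 0 s)) ∘ fun a => Lam.ren a Nat.succ)) = l := by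
                conv_rhs => rw [← List.map_id l]
                apply List.map_congr_left
                intro a _
                simp only [Function.comp, ← Lam.subst_eq, Lam.ren_succ_subst, id]
              rw [e]
              exact forall₂_reflE _
            · simpa [Lam.sub, Lam.sg] using e2.toE
  | @eta t u _ ih =>
    obtain ⟨⟨m, z, us⟩, h1, h2⟩ := ih A hA
    obtain ⟨k, hk⟩ := h1.JZ
    have hk := ((JZ.app (hk.sub (fun n => .var (n + 1))) (.var 0)).lam).symm
    rw [show u.sub (fun n => .var (n + 1)) = u.ren Nat.succ from (Lam.ren_eq_sub _ _).symm] at hk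
    cases m with
    | zero =>
      refine ⟨⟨1, z + 1, padL us⟩, ?_, ?_⟩
      · refine Hs.of_JZ ?_ hk
        have := Hs.refl ⟨1, z + 1, padL us⟩
        simp only [Shape.toLam, Lam.absN, padL, Lam.appList_concat] at this ⊢
        rw [Lam.appList_sub]
        simp only [Lam.sub]
        simp only [Lam.ren_eq_sub] at this ⊢
        exact this
      · refine h2.transE ⟨1, 0, by simp, by simp, forall₂_reflE _⟩
    | succ m =>
      refine ⟨⟨m + 1, z, us⟩, ?_, h2⟩
      refine Hs.of_JZ ?_ hk
      refine Relation.ReflTransGen.single (LHead.lam ?_)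
      have := beta_step ((Lam.absN m (Lam.appList (.var z) us)).ren (Lam.upr Nat.succ)) (.var 0)
      rw [Lam.eta_beta] at this
      rw [show ((Shape.mk (m + 1) z us).toLam.sub fun n => .var (n + 1)) =
        (Shape.mk (m + 1) z us).toLam.ren Nat.succ from (Lam.ren_eq_sub _ _).symm]
      exact this

theorem EtaX.hs {t u : Lam} (e : EtaX t u) {A : Shape} (h : Hs t A) :
    ∃ B, Hs u B ∧ PadRel EtaE A B := by
  obtain ⟨u', k, e', j⟩ := e.sim_steps h
  obtain ⟨B, h1, h2⟩ := e'.shape A rfl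
  exact ⟨B, h1.of_JZ j.symm, h2⟩

theorem EtaX.hs' {t u : Lam} (e : EtaX t u) {B : Shape} (h : Hs u B) :
    ∃ A, Hs t A ∧ PadRel EtaE B A := by
  obtain ⟨s, hs⟩ := HN.of_steps h
  obtain ⟨A, hA⟩ := hconv_iff.1 (e.reflect hs B.lhnf)
  obtain ⟨B', h1, h2⟩ := e.hs hA
  cases h.unique h1
  exact ⟨A, hA, h2.symmE⟩

theorem EtaE.hs {t u : Lam} (e : EtaE t u) {A : Shape} (h : Hs t A) :
    ∃ B, Hs u B ∧ PadRel EtaE A B := by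
  unfold EtaE at e
  induction e with
  | refl => exact ⟨A, h, .reflE _⟩
  | tail _ e ih =>
    obtain ⟨B, h1, h2⟩ := ih
    rcases e with e | e
    · obtain ⟨C, h3, h4⟩ := e.hs h1
      exact ⟨C, h3, h2.transE h4⟩
    · obtain ⟨C, h3, h4⟩ := e.hs' h1
      exact ⟨C, h3, h2.transE h4⟩

/-! ### The extensional Böhm preorder up to η -/

theorem Lam.appList_ren (t : Lam) (l : List Lam) (ρ : ℕ → ℕ) :
    (t.appList l).ren ρ = (t.ren ρ).appList (l.map (fun a => a.ren ρ)) := by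
  induction l generalizing t with
  | nil => rfl
  | cons a l ih => simp only [appList, ih, List.map, ren]

theorem Lam.absN_ren (n : ℕ) (t : Lam) (ρ : ℕ → ℕ) :
    (absN n t).ren ρ = absN n (t.ren (upr^[n] ρ)) := by
  induction n generalizing ρ with
  | zero => rfl
  | succ n ih => simp only [absN, ren, ih, Function.iterate_succ_apply]

theorem LEta.ren {t u : Lam} (h : LEta t u) (ρ : ℕ → ℕ) : LEta (t.ren ρ) (u.ren ρ) := by
  unfold LEta at *
  induction h generalizing ρ with
  | root h =>
    cases h with
    | eta t =>
      refine .root ?_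
      rw [Lam.liftAt_zero]
      simp only [Lam.ren, Lam.ren_succ_ren_upr]
      rw [← Lam.liftAt_zero]
      exact .eta _
  | lam _ ih => exact .lam (ih _)
  | appL u _ ih => exact .appL _ (ih _)
  | appR t _ ih => exact .appR _ (ih _)

theorem LEtaConv.ren {t u : Lam} (h : LEtaConv t u) (ρ : ℕ → ℕ) :
    LEtaConv (t.ren ρ) (u.ren ρ) := by
  unfold LEtaConv at *
  induction h with
  | refl => exact .refl
  | tail _ h ih =>
    refine ih.tail ?_
    rcases h with h | h
    · exact .inl (h.ren ρ)
    · exact .inr (h.ren ρ)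

theorem LHSteps.ren {t u : Lam} (h : LHSteps t u) (ρ : ℕ → ℕ) : LHSteps (t.ren ρ) (u.ren ρ) := by
  rw [Lam.ren_eq_sub, Lam.ren_eq_sub]
  exact h.sub _

theorem LHStep.ren {t u : Lam} (h : LHStep t u) (ρ : ℕ → ℕ) : LHStep (t.ren ρ) (u.ren ρ) := by
  rw [Lam.ren_eq_sub, Lam.ren_eq_sub]
  exact h.sub _

theorem lhnf_ren {t : Lam} (h : t.LHNF) (ρ : ℕ → ℕ) : (t.ren ρ).LHNF := by
  obtain ⟨⟨n, y, ts⟩, rfl⟩ := hnf_shape h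
  simp only [Shape.toLam, Lam.absN_ren, Lam.appList_ren, Lam.ren]
  exact Shape.lhnf ⟨_, _, _⟩

theorem hconv_of_ren {s : ℕ} {t h : Lam} {ρ : ℕ → ℕ} (hs : HN s (t.ren ρ) h) (nf : h.LHNF) :
    t.HConv := by
  induction s generalizing t with
  | zero =>
    by_cases ht : t.LHNF
    · exact ⟨t, .refl, ht⟩
    · unfold Lam.LHNF at ht
      push Not at ht
      obtain ⟨t', ht'⟩ := ht
      cases hs
      exact absurd (ht'.ren ρ) (nf _)
  | succ s ih =>
    by_cases ht : t.LHNF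
    · exact ⟨t, .refl, ht⟩
    · unfold Lam.LHNF at ht
      push Not at ht
      obtain ⟨t', ht'⟩ := ht
      cases hs with
      | step g g' =>
        cases g.det (ht'.ren ρ)
        obtain ⟨h', g1, g2⟩ := ih g'
        exact ⟨h', .head ht' g1, g2⟩

theorem BohmEtaLe.unfold {t u : Lam} (h : BohmEtaLe t u) : BohmEtaClause BohmEtaLe t u := by
  obtain ⟨R, hR, htu⟩ := h
  rcases hR _ _ htu with h | ⟨n, y, ts, us, h, h', e, a1, a2, a3, a4, a5, a6, a7⟩
  · exact .inl h
  · exact .inr ⟨n, y, ts, us, h, h', e, a1, a2, a3, a4, a5, a6,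
      fun i hi hj => ⟨R, hR, a7 i hi hj⟩⟩

theorem BohmEtaLe.ren {t u : Lam} (h : BohmEtaLe t u) (ρ : ℕ → ℕ) :
    BohmEtaLe (t.ren ρ) (u.ren ρ) := by
  refine ⟨fun a b => ∃ (ρ : ℕ → ℕ) (a0 b0 : Lam), BohmEtaLe a0 b0 ∧ a = a0.ren ρ ∧ b = b0.ren ρ,
    ?_, ρ, t, u, h, rfl, rfl⟩
  rintro _ _ ⟨ρ, a, b, hab, rfl, rfl⟩
  rcases hab.unfold with h | ⟨n, y, ts, us, h, h', e, a1, a2, a3, a4, a5, a6, a7⟩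
  · left
    rintro ⟨w, hw, nf⟩
    obtain ⟨s, hs⟩ := HN.of_steps hw
    exact h (hconv_of_ren hs nf)
  · right
    have b3 := a3.ren ρ
    have b6 := a6.ren ρ
    rw [Lam.absN_ren, Lam.appList_ren] at b3 b6
    refine ⟨n, _, _, _, _, _, ?_, a1.ren ρ, lhnf_ren a2 ρ, b3, a4.ren ρ, lhnf_ren a5 ρ, b6, ?_⟩
    · simpa using e
    · intro i hi hj
      rw [List.length_map] at hi hj
      exact ⟨Lam.upr^[n] ρ, _, _, a7 i hi hj, by simp, by simp⟩

def InvE (t u : Lam) : Prop := ∃ t0 u0, EtaE t t0 ∧ BohmEtaLe t0 u0 ∧ EtaE u0 u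

theorem InvE.ren {t u : Lam} (h : InvE t u) (ρ : ℕ → ℕ) : InvE (t.ren ρ) (u.ren ρ) := by
  obtain ⟨t0, u0, h1, h2, h3⟩ := h
  exact ⟨_, _, h1.ren ρ, h2.ren ρ, h3.ren ρ⟩

theorem BohmEtaLe.var (x : ℕ) : BohmEtaLe (.var x) (.var x) := by
  refine ⟨fun a b => a = .var x ∧ b = .var x, ?_, rfl, rfl⟩
  rintro _ _ ⟨rfl, rfl⟩
  exact .inr ⟨0, x, [], [], _, _, rfl, .refl, Shape.lhnf ⟨0, x, []⟩, .refl, .refl,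
    Shape.lhnf ⟨0, x, []⟩, .refl, fun i hi => by simp at hi⟩

theorem BohmEtaLe.inv {t u : Lam} (h : BohmEtaLe t u) : InvE t u := ⟨t, u, .refl _, h, .refl _⟩

theorem InvE.padOK : PadOK InvE := ⟨fun _ _ ρ h => h.ren ρ, (BohmEtaLe.var 0).inv⟩

theorem InvE.hs {t u : Lam} (h : InvE t u) {A : Shape} (hA : Hs t A) :
    ∃ B, Hs u B ∧ PadRel InvE A B := by
  obtain ⟨t0, u0, h1, h2, h3⟩ := h
  obtain ⟨A0, g0, p0⟩ := h1.hs hA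
  rcases h2.unfold with h | ⟨n, y, ts, us, h, h', e, a1, a2, a3, a4, a5, a6, a7⟩
  · exact absurd (hconv_iff.2 ⟨_, g0⟩) h
  · obtain ⟨A1, rfl⟩ := hnf_shape a2
    obtain ⟨B1, rfl⟩ := hnf_shape a5
    cases g0.unique (show Hs t0 A1 from a1)
    obtain ⟨T, gT, pT⟩ := (EtaE.of_conv a3).hs (Hs.refl A0)
    cases gT.unique (Hs.refl ⟨n, y, ts⟩)
    obtain ⟨U, gU, pU⟩ := (EtaE.of_conv a6).hs (Hs.refl B1)
    cases gU.unique (Hs.refl ⟨n, y, us⟩)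
    obtain ⟨B, gB, pB⟩ := h3.hs (show Hs u0 B1 from a4)
    refine ⟨B, gB, ?_⟩
    have q1 : PadRel EtaE A ⟨n, y, ts⟩ := p0.transE pT
    have q2 : PadRel EtaE ⟨n, y, us⟩ B := pU.symmE.transE pB
    have q3 : PadRel InvE ⟨n, y, ts⟩ ⟨n, y, us⟩ := by
      refine ⟨0, 0, rfl, rfl, ?_⟩
      refine List.forall₂_iff_get.2 ⟨e, fun i hi hj => (a7 i hi hj).inv⟩
    have q4 : PadRel InvE A ⟨n, y, us⟩ := by
      refine PadRel.comp EtaE.padOK InvE.padOK ?_ q1 q3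
      rintro a b c hab ⟨b0, c0, x1, x2, x3⟩
      exact ⟨b0, c0, hab.trans x1, x2, x3⟩
    refine PadRel.comp InvE.padOK EtaE.padOK ?_ q4 q2
    rintro a b c ⟨a0, b0, x1, x2, x3⟩ hbc
    exact ⟨a0, b0, x1, x2, x3.trans hbc⟩

/-! ### Finite evidence of difference -/

inductive Diff : Lam → Lam → Prop
  | base {t u : Lam} (A : Shape) : Hs t A →
      (∀ B, Hs u B → ¬ (A.n = B.n ∧ A.y = B.y ∧ A.ts.length = B.ts.length)) → Diff t u
  | step {t u : Lam} (n y : ℕ) (ts us : List Lam) : ts.length = us.length →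
      Hs t ⟨n, y, ts⟩ → Hs u ⟨n, y, us⟩ →
      (i : ℕ) → (hi : i < ts.length) → (hj : i < us.length) → Diff ts[i] us[i] → Diff t u

theorem diff_of_not_bohmLe {t u : Lam} (h : ¬ BohmLe t u) : Diff t u := by
  by_contra hd
  apply h
  refine ⟨fun a b => ¬ Diff a b, ?_, hd⟩
  intro a b hab
  by_cases hc : a.HConv
  · right
    obtain ⟨⟨n, y, ts⟩, hA⟩ := hconv_iff.1 hc
    have : ¬ ∀ B, Hs b B → ¬ (n = B.n ∧ y = B.y ∧ ts.length = B.ts.length) :=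
      fun hh => hab (.base _ hA hh)
    push Not at this
    obtain ⟨⟨m, z, us⟩, hB, e1, e2, e3⟩ := this
    simp only at e1 e2 e3
    subst e1 e2
    exact ⟨n, y, ts, us, e3, hA, hB,
      fun i hi hj hdi => hab (.step n y ts us e3 hA hB i hi hj hdi)⟩
  · exact .inl hc

/-! ### Checkers machinery -/

def cabsN (p : Player) : ℕ → CTerm → CTerm
  | 0, t => t
  | n + 1, t => .lam p (cabsN p n t)

def cappList (p : Player) : CTerm → List CTerm → CTerm
  | t, [] => t
  | t, u :: us => cappList p (.app p t u) us

theorem cappList_append (p : Player) (t : CTerm) (l l' : List CTerm) :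
    cappList p t (l ++ l') = cappList p (cappList p t l) l' := by
  induction l generalizing t with
  | nil => rfl
  | cons a l ih => simp only [List.cons_append, cappList, ih]

theorem tag_absN (p : Player) (n : ℕ) (t : Lam) : (Lam.absN n t).tag p = cabsN p n (t.tag p) := by
  induction n with
  | zero => rfl
  | succ n ih => simp only [Lam.absN, Lam.tag, cabsN, ih]

theorem tag_appList (p : Player) (t : Lam) (l : List Lam) :
    (Lam.appList t l).tag p = cappList p (t.tag p) (l.map (fun a => a.tag p)) := by
  induction l generalizing t with
  | nil => rfl
  | cons a l ih => simp only [Lam.appList, List.map, cappList, ih, Lam.tag]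

/-- All free indices are below `d`. -/
def CB : ℕ → CTerm → Prop
  | d, .var n => n < d
  | d, .lam _ t => CB (d + 1) t
  | d, .app _ t u => CB d t ∧ CB d u

theorem CB.mono {d e : ℕ} {t : CTerm} (h : CB d t) (hde : d ≤ e) : CB e t := by
  induction t generalizing d e with
  | var n => simp only [CB] at *; omega
  | lam p t ih => exact ih h (by omega)
  | app p t u iht ihu => exact ⟨iht h.1 hde, ihu h.2 hde⟩

theorem CB.lift {d e : ℕ} {t : CTerm} (h : CB d t) (hde : d ≤ e) : t.liftAt e = t := by
  induction t generalizing d e with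
  | var n =>
    simp only [CB, CTerm.liftAt] at *
    rw [if_pos (by omega)]
  | lam p t ih => simp only [CTerm.liftAt]; rw [ih h (by omega)]
  | app p t u iht ihu => simp only [CTerm.liftAt]; rw [iht h.1 hde, ihu h.2 hde]

theorem CB.subst {d e : ℕ} {t : CTerm} (h : CB d t) (hde : d ≤ e) (v : CTerm) :
    t.subst e v = t := by
  induction t generalizing d e v with
  | var n =>
    simp only [CB, CTerm.subst] at *
    rw [if_neg (by omega), if_neg (by omega)]
  | lam p t ih => simp only [CTerm.subst]; rw [ih h (by omega)]
  | app p t u iht ihu => simp only [CTerm.subst]; rw [iht h.1 hde, ihu h.2 hde]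

theorem cabsN_subst (p : Player) (n x : ℕ) (t : CTerm) {a : CTerm} (ha : CB 0 a) :
    (cabsN p n t).subst x a = cabsN p n (t.subst (x + n) a) := by
  induction n generalizing x with
  | zero => rfl
  | succ n ih =>
    simp only [cabsN, CTerm.subst]
    rw [ha.lift (le_refl _), ih, show x + 1 + n = x + (n + 1) by omega]

theorem cappList_subst (p : Player) (t : CTerm) (l : List CTerm) (x : ℕ) (a : CTerm) :
    (cappList p t l).subst x a = cappList p (t.subst x a) (l.map (fun b => b.subst x a)) := by
  induction l generalizing t with
  | nil => rfl
  | cons b l ih => simp only [cappList, List.map, ih, CTerm.subst]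

theorem CB.absN {p : Player} {n d : ℕ} {t : CTerm} (h : CB (d + n) t) : CB d (cabsN p n t) := by
  induction n generalizing d with
  | zero => exact h
  | succ n ih =>
    refine ih (d := d + 1) ?_
    rwa [show d + 1 + n = d + (n + 1) by omega]

theorem CB.appList {p : Player} {d : ℕ} {t : CTerm} {l : List CTerm} (h : CB d t)
    (hl : ∀ a ∈ l, CB d a) : CB d (cappList p t l) := by
  induction l generalizing t with
  | nil => exact h
  | cons b l ih =>
    refine ih (t := .app p t b) ⟨h, hl _ (by simp)⟩ (fun a ha => hl a (by simp [ha]))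

/-! #### Tuples and selectors -/

def lvars : ℕ → List Lam
  | 0 => []
  | j + 1 => .var (j + 1) :: lvars j

def cvars : ℕ → List CTerm
  | 0 => []
  | j + 1 => .var (j + 1) :: cvars j

theorem tag_lvars (p : Player) (j : ℕ) : (lvars j).map (fun a => a.tag p) = cvars j := by
  induction j with
  | zero => rfl
  | succ j ih => simp only [lvars, cvars, List.map, ih, Lam.tag]

theorem cvars_CB {j d : ℕ} (h : j < d) : ∀ a ∈ cvars j, CB d a := by
  induction j with
  | zero => simp [cvars]
  | succ j ih =>
    intro a ha
    simp only [cvars, List.mem_cons] at ha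
    rcases ha with rfl | ha
    · exact h
    · exact ih (by omega) a ha

def tupL (K : ℕ) : Lam := Lam.absN (K + 1) (Lam.appList (.var 0) (lvars K))

def Q (j : ℕ) (as : List CTerm) : CTerm :=
  cabsN .white (j + 1) (cappList .white (.var 0) (as ++ cvars j))

theorem tag_tupL (K : ℕ) : (tupL K).tag .white = Q K [] := by
  unfold tupL Q
  rw [tag_absN, tag_appList, tag_lvars]
  rfl

theorem Q_CB (j : ℕ) : CB 0 (Q j []) := by
  unfold Q
  refine CB.absN (CB.appList ?_ ?_)
  · simp [CB]
  · intro a ha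
    refine cvars_CB (j := j) (by omega) a (by simpa using ha)

theorem map_subst_CB {l : List CTerm} {d x : ℕ} (h : ∀ a ∈ l, CB d a) (hx : d ≤ x) (v : CTerm) :
    l.map (fun b => b.subst x v) = l := by
  conv_rhs => rw [← List.map_id l]
  apply List.map_congr_left
  intro a ha
  exact (h a ha).subst hx v

theorem Q_subst (j : ℕ) {as : List CTerm} {a : CTerm} (has : ∀ b ∈ as, CB 0 b) (ha : CB 0 a) :
    (cabsN .white (j + 1) (cappList .white (.var 0) (as ++ cvars (j + 1)))).subst 0 a =
      Q j (as ++ [a]) := by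
  rw [cabsN_subst _ _ _ _ ha, cappList_subst]
  unfold Q
  congr 2
  rw [List.map_append, map_subst_CB has (by omega)]
  simp only [cvars, List.map_cons, CTerm.subst]
  rw [map_subst_CB (cvars_CB (Nat.lt_succ_self j)) (by omega)]
  simp

def selL : ℕ → ℕ → Lam
  | 0, K => Lam.absN (K + 1) (.var K)
  | i + 1, K => .lam (selL i K)

def csel : ℕ → ℕ → CTerm
  | 0, K => cabsN .white (K + 1) (.var K)
  | i + 1, K => .lam .white (csel i K)

theorem tag_selL (i K : ℕ) : (selL i K).tag .white = csel i K := by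
  induction i with
  | zero => simp only [selL, csel, tag_absN, Lam.tag]
  | succ i ih => simp only [selL, csel, Lam.tag, ih]

theorem csel_CB (i K : ℕ) : CB 0 (csel i K) := by
  induction i with
  | zero => exact CB.absN (by simp [CB])
  | succ i ih => exact ih.mono (by omega)

/-! #### Counted spine reduction -/

inductive Run : CTerm → ℕ → CTerm → Prop
  | refl (t : CTerm) : Run t 0 t
  | tau {t u v : CTerm} {k : ℕ} : CSpine SilentRoot t u → Run u k v → Run t k v
  | int {t u v : CTerm} {k : ℕ} : CSpine InterRoot t u → Run u k v → Run t (k + 1) v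

theorem Run.trans {t u v : CTerm} {k l : ℕ} (h : Run t k u) (h' : Run u l v) : Run t (k + l) v := by
  induction h with
  | refl t => simpa using h'
  | tau h _ ih => exact .tau h (ih h')
  | @int _ _ _ k h _ ih =>
    rw [show k + 1 + l = k + l + 1 by omega]
    exact .int h (ih h')

theorem Run.app {t u : CTerm} {k : ℕ} (h : Run t k u) (p : Player) (a : CTerm) :
    Run (.app p t a) k (.app p u a) := by
  induction h with
  | refl t => exact .refl _
  | tau h _ ih => exact .tau (.appL _ _ h) ih
  | int h _ ih => exact .int (.appL _ _ h) ih

theorem Run.appList {t u : CTerm} {k : ℕ} (h : Run t k u) (p : Player) (l : List CTerm) :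
    Run (cappList p t l) k (cappList p u l) := by
  induction l generalizing t u with
  | nil => exact h
  | cons a l ih => exact ih (h.app p a)

theorem Run.bigStep {t u : CTerm} {k j : ℕ} (h : Run t k u) (h' : BigStep u j) :
    BigStep t (k + j) := by
  induction h with
  | refl t => simpa using h'
  | tau h _ ih => exact .silent (.spine h) (ih h')
  | @int _ _ _ k h _ ih =>
    rw [show k + 1 + j = k + j + 1 by omega]
    exact .inter (.spine h) (ih h')

theorem Run.beta (p q : Player) (t u : CTerm) :
    Run (.app q (.lam p t) u) (p.gamma q) (t.subst 0 u) := by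
  cases p <;> cases q
  · exact .tau (.root (.beta _ _ _)) (.refl _)
  · exact .int (.root (InterRoot.beta .white _ _)) (.refl _)
  · exact .int (.root (InterRoot.beta .black _ _)) (.refl _)
  · exact .tau (.root (.beta _ _ _)) (.refl _)

theorem Run.cast {t u : CTerm} {k l : ℕ} (h : Run t k u) (e : k = l) : Run t l u := e ▸ h

theorem Run.feed (q : Player) (j : ℕ) (l : List CTerm) (as : List CTerm)
    (has : ∀ b ∈ as, CB 0 b) (hl : ∀ b ∈ l, CB 0 b) :
    Run (cappList q (Q (l.length + j) as) l) (l.length * Player.gamma .white q) (Q j (as ++ l)) := by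
  induction l generalizing as with
  | nil => simpa [cappList] using Run.refl _
  | cons a l ih =>
    have ha : CB 0 a := hl a (by simp)
    have h1 : Run (.app q (Q ((a :: l).length + j) as) a) (Player.gamma .white q)
        (Q (l.length + j) (as ++ [a])) := by
      rw [← Q_subst _ has ha, List.length_cons,
        show l.length + 1 + j = (l.length + j) + 1 by omega]
      exact Run.beta _ _ _ _
    have h2 := ih (as ++ [a]) (by
      intro b hb
      rcases List.mem_append.1 hb with hb | hb
      · exact has b hb
      · simp only [List.mem_singleton] at hb; exact hb ▸ ha) (fun b hb => hl b (by simp [hb]))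
    have h3 := (h1.appList q l).trans h2
    simp only [List.append_assoc, List.singleton_append] at h3
    exact h3.cast (by simp only [List.length_cons]; ring)

theorem Run.const (l : List CTerm) {a : CTerm} (ha : CB 0 a) :
    Run (cappList .white (cabsN .white l.length a) l) 0 a := by
  induction l with
  | nil => exact .refl _
  | cons b l ih =>
    have h1 := Run.beta .white .white (cabsN .white l.length a) b
    rw [(CB.absN (ha.mono (by omega))).subst (le_refl 0)] at h1
    exact (h1.appList .white l).trans ih

theorem Run.sel (i K : ℕ) (l : List CTerm) (hl : ∀ b ∈ l, CB 0 b) (hi : i < l.length)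
    (hK : l.length = i + 1 + K) : Run (cappList .white (csel i K) l) 0 l[i] := by
  induction i generalizing l with
  | zero =>
    cases l with
    | nil => simp at hi
    | cons a l =>
      have hlen : l.length = K := by simp at hK; omega
      subst hlen
      have ha : CB 0 a := hl a (by simp)
      have h1 := Run.beta .white .white (cabsN .white l.length (.var l.length)) a
      rw [cabsN_subst _ _ _ _ ha] at h1
      simp only [CTerm.subst, zero_add, if_true] at h1
      exact (h1.appList .white l).trans (Run.const l ha)
  | succ i ih =>
    cases l with
    | nil => simp at hi
    | cons a l =>
      have h1 := Run.beta .white .white (csel i K) a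
      rw [(csel_CB i K).subst (le_refl 0)] at h1
      have h2 := ih l (fun b hb => hl b (by simp [hb])) (by simp at hi; omega)
        (by simp at hK; omega)
      exact (h1.appList .white l).trans h2

theorem Run.select (i K : ℕ) (l : List CTerm) (hl : ∀ b ∈ l, CB 0 b) (hi : i < l.length)
    (hK : l.length = i + 1 + K) : Run (.app .white (Q 0 l) (csel i K)) 0 l[i] := by
  have h1 := Run.beta .white .white (cappList .white (.var 0) l) (csel i K)
  rw [cappList_subst, map_subst_CB hl (le_refl 0)] at h1
  simp only [CTerm.subst, if_true] at h1
  have h2 := h1.trans (Run.sel i K l hl hi hK)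
  have e : Q 0 l = .lam .white (cappList .white (.var 0) l) := by simp [Q, cabsN, cvars]
  rw [e]
  exact h2

theorem not_cspine_cappList (R : CTerm → CTerm → Prop)
    (hR : ∀ p t a u, R (.app p t a) u → ∃ q b, t = .lam q b) (hv : ∀ y u, ¬ R (.var y) u)
    (p : Player) (y : ℕ) (ts : List CTerm) (u : CTerm) :
    ¬ CSpine R (cappList p (.var y) ts) u := by
  induction ts using List.reverseRecOn generalizing u with
  | nil =>
    intro h
    cases h with
    | root h => exact hv _ _ h
  | append_singleton ts a ih =>
    rw [cappList_append]
    simp only [cappList]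
    intro h
    generalize hx : cappList p (.var y) ts = x at *
    cases h with
    | root h =>
      obtain ⟨q, b, rfl⟩ := hR _ _ _ _ h
      rcases List.eq_nil_or_concat ts with rfl | ⟨l, b, rfl⟩
      · simp [cappList] at hx
      · simp [cappList_append, cappList] at hx
    | appL _ _ h => exact ih _ h

theorem not_chead_Q (R : CTerm → CTerm → Prop)
    (hR : ∀ p t a u, R (.app p t a) u → ∃ q b, t = .lam q b) (hv : ∀ y u, ¬ R (.var y) u)
    (hl : ∀ p b u, ¬ R (.lam p b) u)
    (n : ℕ) (ts : List CTerm) (u : CTerm) :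
    ¬ CHead R (cabsN .white n (cappList .white (.var 0) ts)) u := by
  induction n generalizing u with
  | zero =>
    intro h
    simp only [cabsN] at h
    generalize hx : cappList .white (.var 0) ts = x at *
    cases h with
    | spine h => subst hx; exact not_cspine_cappList R hR hv _ _ _ _ h
    | lam p h =>
      rcases List.eq_nil_or_concat ts with rfl | ⟨l, b, rfl⟩
      · simp [cappList] at hx
      · simp [cappList_append, cappList] at hx
  | succ n ih =>
    intro h
    simp only [cabsN] at h
    cases h with
    | spine h =>
      cases h with
      | root h => exact hl _ _ _ h
    | lam p h => exact ih _ h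

theorem Q_hnf (j : ℕ) (as : List CTerm) : (Q j as).HNF := by
  rintro u (h | h)
  · refine not_chead_Q SilentRoot ?_ ?_ ?_ _ _ _ h
    · intro p t a u h
      cases h
      exact ⟨_, _, rfl⟩
    · intro y u h; cases h
    · intro p b u h; cases h
  · refine not_chead_Q InterRoot ?_ ?_ ?_ _ _ _ h
    · intro p t a u h
      cases h
      exact ⟨_, _, rfl⟩
    · intro y u h; cases h
    · intro p b u h; cases h

/-! #### Closing a black term with a closed white term -/

def T (P : CTerm) : Lam → ℕ → CTerm
  | .var n, d => if n < d then .var n else P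
  | .lam t, d => .lam .black (T P t (d + 1))
  | .app t u, d => .app .black (T P t d) (T P u d)

theorem T_CB {P : CTerm} (hP : CB 0 P) (t : Lam) (d : ℕ) : CB d (T P t d) := by
  induction t generalizing d with
  | var n =>
    simp only [T]
    split_ifs with h
    · exact h
    · exact hP.mono (by omega)
  | lam t ih => exact ih _
  | app t u iht ihu => exact ⟨iht _, ihu _⟩

theorem T_lift {P : CTerm} (hP : CB 0 P) (u : Lam) {c e : ℕ} (h : c ≤ e) :
    T P (u.liftAt c) (e + 1) = (T P u e).liftAt c := by
  induction u generalizing c e with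
  | var n =>
    simp only [T, Lam.liftAt]
    by_cases h1 : n < c
    · rw [if_pos h1, if_pos (by omega), if_pos (by omega)]
      simp only [CTerm.liftAt]
      rw [if_pos h1]
    · rw [if_neg h1]
      by_cases h2 : n < e
      · rw [if_pos (by omega), if_pos h2]
        simp only [CTerm.liftAt]
        rw [if_neg h1]
      · rw [if_neg (by omega), if_neg h2, hP.lift (by omega)]
  | lam t ih => simp only [T, Lam.liftAt, CTerm.liftAt]; rw [ih (by omega)]
  | app t u iht ihu => simp only [T, Lam.liftAt, CTerm.liftAt]; rw [iht h, ihu h]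

theorem T_subst {P : CTerm} (hP : CB 0 P) (t u : Lam) {x e : ℕ} (h : x ≤ e) :
    T P (t.subst x u) e = (T P t (e + 1)).subst x (T P u e) := by
  induction t generalizing x e u with
  | var n =>
    simp only [T, Lam.subst]
    by_cases h1 : n = x
    · rw [if_pos h1, if_pos (by omega)]
      simp only [CTerm.subst]
      rw [if_pos h1]
    · rw [if_neg h1]
      by_cases h2 : x < n
      · rw [if_pos h2]
        by_cases h3 : n < e + 1
        · rw [if_pos h3]
          simp only [T, CTerm.subst]
          rw [if_neg h1, if_pos h2, if_pos (by omega)]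
        · rw [if_neg h3, hP.subst (by omega)]
          simp only [T]
          rw [if_neg (by omega)]
      · rw [if_neg h2, if_pos (by omega)]
        simp only [T, CTerm.subst]
        rw [if_neg h1, if_neg h2, if_pos (by omega)]
  | lam t ih =>
    simp only [T, Lam.subst, CTerm.subst]
    rw [ih _ (by omega), T_lift hP _ (by omega)]
  | app t s iht ihs => simp only [T, Lam.subst, CTerm.subst]; rw [iht _ h, ihs _ h]

theorem T_subst_P {P : CTerm} (hP : CB 0 P) (t : Lam) (d : ℕ) :
    (T P t (d + 1)).subst d P = T P t d := by
  induction t generalizing d with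
  | var n =>
    simp only [T]
    by_cases h1 : n < d
    · rw [if_pos (by omega), if_pos h1]
      simp only [CTerm.subst]
      rw [if_neg (by omega), if_neg (by omega)]
    · rw [if_neg h1]
      by_cases h2 : n < d + 1
      · rw [if_pos h2]
        simp only [CTerm.subst]
        rw [if_pos (by omega)]
      · rw [if_neg h2, hP.subst (by omega)]
  | lam t ih => simp only [T, CTerm.subst]; rw [hP.lift (le_refl _), ih]
  | app t s iht ihs => simp only [T, CTerm.subst]; rw [iht, ihs]

theorem T_spine {P : CTerm} (hP : CB 0 P) {t t' : Lam} (h : LSpine LBetaRoot t t') (d : ℕ) :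
    CSpine SilentRoot (T P t d) (T P t' d) := by
  induction h with
  | root h =>
    cases h
    rw [T_subst hP _ _ (by omega)]
    exact .root (.beta _ _ _)
  | appL u _ ih => exact .appL _ _ ih

theorem T_run {P : CTerm} (hP : CB 0 P) {t t' : Lam}
    (h : Relation.ReflTransGen (LSpine LBetaRoot) t t') (d : ℕ) :
    Run (T P t d) 0 (T P t' d) := by
  induction h using Relation.ReflTransGen.head_induction_on with
  | refl => exact .refl _
  | head h _ ih => exact .tau (T_spine hP h d) ih

theorem T_appList (P : CTerm) (t : Lam) (l : List Lam) (d : ℕ) :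
    T P (Lam.appList t l) d = cappList .black (T P t d) (l.map (fun a => T P a d)) := by
  induction l generalizing t with
  | nil => rfl
  | cons a l ih => simp only [Lam.appList, List.map, cappList, ih, T]

theorem T_tag (P : CTerm) (t : Lam) : ∃ F, ∀ d, F ≤ d → T P t d = t.tag .black := by
  induction t with
  | var n => exact ⟨n + 1, fun d hd => by simp only [T, Lam.tag]; rw [if_pos (by omega)]⟩
  | lam t ih =>
    obtain ⟨F, hF⟩ := ih
    exact ⟨F, fun d hd => by simp only [T, Lam.tag]; rw [hF _ (by omega)]⟩
  | app t u iht ihu =>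
    obtain ⟨F, hF⟩ := iht
    obtain ⟨G, hG⟩ := ihu
    exact ⟨F + G, fun d hd => by simp only [T, Lam.tag]; rw [hF _ (by omega), hG _ (by omega)]⟩

theorem steps_of_lam {a r : Lam} (h : LHSteps (.lam a) r) : ∃ b, r = .lam b := by
  unfold LHSteps at h
  induction h with
  | refl => exact ⟨a, rfl⟩
  | tail _ h ih =>
    obtain ⟨b, rfl⟩ := ih
    cases h with
    | spine h => exact absurd h LSpine.not_lam
    | lam h => exact ⟨_, rfl⟩

theorem steps_lam {t r : Lam} (h : LHSteps t (.lam r)) :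
    ∃ s, Relation.ReflTransGen (LSpine LBetaRoot) t (.lam s) ∧ LHSteps s r := by
  unfold LHSteps at h
  induction h using Relation.ReflTransGen.head_induction_on with
  | refl => exact ⟨r, .refl, .refl⟩
  | head h _ ih =>
    obtain ⟨s, h1, h2⟩ := ih
    cases h with
    | spine h => exact ⟨s, .head h h1, h2⟩
    | @lam a b h =>
      rcases h1.cases_head with e | ⟨c, hc, _⟩
      · cases e
        exact ⟨a, .refl, .head h h2⟩
      · exact absurd hc LSpine.not_lam

theorem steps_appList {t : Lam} {y : ℕ} {ts : List Lam}
    (h : LHSteps t (Lam.appList (.var y) ts)) :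
    Relation.ReflTransGen (LSpine LBetaRoot) t (Lam.appList (.var y) ts) := by
  unfold LHSteps at h
  induction h using Relation.ReflTransGen.head_induction_on with
  | refl => exact .refl
  | head h h' ih =>
    cases h with
    | spine h => exact .head h ih
    | lam h =>
      obtain ⟨b, hb⟩ := steps_of_lam h'
      exact absurd hb (appList_ne_lam _ _ _)

theorem stack_run {P : CTerm} (hP : CB 0 P) (n y : ℕ) (ts : List Lam) (t : Lam)
    (h : Hs t ⟨n, y, ts⟩) :
    Run (cappList .white (T P t 0) (List.replicate n P)) n (T P (Lam.appList (.var y) ts) 0) := by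
  induction n generalizing t with
  | zero => exact T_run hP (steps_appList h) 0
  | succ n ih =>
    obtain ⟨s, h1, h2⟩ := steps_lam h
    have r1 := ((T_run hP h1 0).app .white P).trans (Run.beta .black .white (T P s 1) P)
    rw [T_subst_P hP] at r1
    have r2 := (r1.appList .white (List.replicate n P)).trans (ih s h2)
    exact r2.cast (by simp [Player.gamma]; omega)

theorem node_run {K : ℕ} (n y : ℕ) (ts : List Lam) (t : Lam) (h : Hs t ⟨n, y, ts⟩) (r j : ℕ)
    (hK : K = ts.length + r + j) :
    Run (cappList .white (T (Q K []) t 0) (List.replicate (n + r) (Q K []))) (n + ts.length)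
      (Q j (ts.map (fun a => T (Q K []) a 0) ++ List.replicate r (Q K []))) := by
  have hP := Q_CB K
  have hts : ∀ b ∈ ts.map (fun a => T (Q K []) a 0), CB 0 b := by
    intro b hb
    obtain ⟨a, _, rfl⟩ := List.mem_map.1 hb
    exact T_CB hP a 0
  have r1 := stack_run hP n y ts t h
  rw [T_appList] at r1
  have r2 := Run.feed .black (r + j) (ts.map (fun a => T (Q K []) a 0)) [] (by simp) hts
  have r3 := Run.feed .white j (List.replicate r (Q K [])) (ts.map (fun a => T (Q K []) a 0)) hts
    (by intro b hb; rw [List.eq_of_mem_replicate hb]; exact hP)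
  have e0 : T (Q K []) (.var y) 0 = Q K [] := by simp [T]
  rw [e0] at r1
  simp only [List.length_map, List.length_replicate, List.nil_append] at r2 r3
  rw [show ts.length + (r + j) = K by omega] at r2
  rw [List.replicate_add, cappList_append]
  have r4 := (((r1.trans r2).appList .white (List.replicate r (Q K []))).trans r3)
  exact r4.cast (by simp [Player.gamma])

theorem bohm_out {t u : Lam} (hd : Diff t u) (hi : InvE t u) :
    ∃ K0, ∀ K, K0 ≤ K → ∃ (args : List Lam) (i i' : ℕ), i ≠ i' ∧
      BigStep (cappList .white (T (Q K []) t 0) (args.map (fun a => a.tag .white))) i ∧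
      BigStep (cappList .white (T (Q K []) u 0) (args.map (fun a => a.tag .white))) i' := by
  induction hd with
  | @base t u A hA hne =>
    obtain ⟨B, hB, hp⟩ := hi.hs hA
    have hlen := hp.len
    have hn : A.n ≠ B.n := by
      intro e
      obtain ⟨c1, c2⟩ := hp.cancel InvE.padOK (d := 0) (by omega)
      exact hne B hB ⟨e, by omega, c2.length_eq⟩
    obtain ⟨n, y, ts⟩ := A
    obtain ⟨m, z, us⟩ := B
    simp only at hlen hn
    refine ⟨n + m + ts.length + us.length, fun K hK => ?_⟩
    refine ⟨List.replicate (n + m) (tupL K), n + ts.length, m + us.length, by omega, ?_, ?_⟩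
    · rw [List.map_replicate, tag_tupL]
      exact (node_run n y ts t hA m (K - ts.length - m) (by omega)).bigStep (.nf (Q_hnf _ _))
    · rw [List.map_replicate, tag_tupL, add_comm n m]
      exact (node_run m z us u hB n (K - us.length - n) (by omega)).bigStep (.nf (Q_hnf _ _))
  | @step t u n y ts us e hA hB i hi1 hj1 _ ih =>
    obtain ⟨B', hB', hp⟩ := hi.hs hA
    cases hB.unique hB'
    obtain ⟨_, c2⟩ := hp.cancel InvE.padOK (d := 0) rfl
    simp only [Function.iterate_zero, id] at c2
    have hsub : InvE ts[i] us[i] := (List.forall₂_iff_get.1 c2).2 i hi1 hj1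
    obtain ⟨K0, hK0⟩ := ih hsub
    refine ⟨K0 + ts.length, fun K hK => ?_⟩
    obtain ⟨args, k, k', hne, b1, b2⟩ := hK0 K (by omega)
    have hP := Q_CB K
    have key : ∀ (w : Lam) (ws : List Lam) (hw : Hs w ⟨n, y, ws⟩) (hwl : ws.length = ts.length)
        (hi2 : i < ws.length) (c : ℕ),
        BigStep (cappList .white (T (Q K []) ws[i] 0) (args.map (fun a => a.tag .white))) c →
        BigStep (cappList .white (T (Q K []) w 0)
          ((List.replicate (n + (K - ts.length)) (tupL K) ++ selL i (K - i - 1) :: args).map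
            (fun a => a.tag .white))) (n + ts.length + c) := by
      intro w ws hw hwl hi2 c hc
      rw [List.map_append, List.map_cons, List.map_replicate, tag_tupL, tag_selL,
        cappList_append]
      simp only [cappList]
      have r1 := node_run n y ws w hw (K - ts.length) 0 (K := K) (by omega)
      have hall : ∀ b ∈ ws.map (fun a => T (Q K []) a 0) ++ List.replicate (K - ts.length) (Q K []),
          CB 0 b := by
        intro b hb
        rcases List.mem_append.1 hb with hb | hb
        · obtain ⟨a, _, rfl⟩ := List.mem_map.1 hb
          exact T_CB hP a 0
        · rw [List.eq_of_mem_replicate hb]; exact hP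
      have r2 := Run.select i (K - i - 1) _ hall (by simp; omega) (by simp; omega)
      rw [List.getElem_append_left (by simpa using hi2), List.getElem_map] at r2
      have r3 := ((r1.app .white _).trans r2).appList .white (args.map (fun a => a.tag .white))
      exact (r3.cast (by omega)).bigStep hc
    exact ⟨_, _, _, by omega, key t ts hA rfl hi1 k b1, key u us hB e.symm hj1 k' b2⟩

theorem close_run {P : CTerm} (hP : CB 0 P) (t : Lam) (F : ℕ) :
    Run (cappList .white (cabsN .white F (T P t F)) (List.replicate F P)) 0 (T P t 0) := by
  induction F with
  | zero => exact .refl _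
  | succ F ih =>
    have h1 := Run.beta .white .white (cabsN .white F (T P t (F + 1))) P
    rw [cabsN_subst _ _ _ _ hP, zero_add, T_subst_P hP] at h1
    exact (h1.appList .white (List.replicate F P)).trans ih

def ctxLam : ℕ → LCtx
  | 0 => .hole
  | n + 1 => .lam (ctxLam n)

def ctxApp : LCtx → List Lam → LCtx
  | C, [] => C
  | C, a :: l => ctxApp (.appL C a) l

theorem ctxLam_fill (n : ℕ) (t : CTerm) : ((ctxLam n).tag .white).fill t = cabsN .white n t := by
  induction n with
  | zero => rfl
  | succ n ih => simp only [ctxLam, LCtx.tag, CCtx.fill, cabsN, ih]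

theorem ctxApp_fill (C : LCtx) (l : List Lam) (t : CTerm) :
    ((ctxApp C l).tag .white).fill t =
      cappList .white ((C.tag .white).fill t) (l.map (fun a => a.tag .white)) := by
  induction l generalizing C with
  | nil => rfl
  | cons a l ih => simp only [ctxApp, ih, List.map, cappList, LCtx.tag, CCtx.fill]

/-- Interaction Böhm-out: λ-terms in the extensional Böhm preorder but not in the
Böhm preorder are separated by the number of interaction steps, using a white
lifted ordinary context against the black liftings of the terms. -/
theorem interaction_bohm_out (t u : Lam) (h₁ : BohmEtaLe t u) (h₂ : ¬ BohmLe t u) :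
    ∃ (C : LCtx) (i i' : ℕ), i ≠ i' ∧
      BigStep ((C.tag .white).fill (t.tag .black)) i ∧
      BigStep ((C.tag .white).fill (u.tag .black)) i' := by
  obtain ⟨K, hK⟩ := bohm_out (diff_of_not_bohmLe h₂) h₁.inv
  obtain ⟨args, i, i', hne, b1, b2⟩ := hK K (le_refl _)
  have hP := Q_CB K
  obtain ⟨F, hF⟩ := T_tag (Q K []) t
  obtain ⟨G, hG⟩ := T_tag (Q K []) u
  refine ⟨ctxApp (ctxLam (F + G)) (List.replicate (F + G) (tupL K) ++ args), i, i', hne, ?_, ?_⟩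
  · rw [ctxApp_fill, ctxLam_fill, List.map_append, List.map_replicate, tag_tupL, cappList_append,
      ← hF (F + G) (by omega)]
    have := ((close_run hP t (F + G)).appList .white (args.map (fun a => a.tag .white))).bigStep b1
    rwa [zero_add] at this
  · rw [ctxApp_fill, ctxLam_fill, List.map_append, List.map_replicate, tag_tupL, cappList_append,
      ← hG (F + G) (by omega)]
    have := ((close_run hP u (F + G)).appList .white (args.map (fun a => a.tag .white))).bigStep b2
    rwa [zero_add] at this
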